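/- There exists a universal constant C > 0 such that for all σ ∈ (0,1], if the restriction of √s to A = [0,1]^{2d} belongs to the Hölder space 𝓗^σ([0,1]^{2d}) with semi-norm |√s|_A|_σ, then the estimator ŝ = ŝ(L₀, ∞) of the selection procedure satisfies C · E[ H²(s 1_A, ŝ) ] ≤ (d · |√s|_A|_σ)^{2d/(d+σ)} ((log n)/n)^{σ/(σ+d)} + (log n)/n, where L₀ is the universal constant of the oracle inequality of Theorem 1. -/

import Mathlib

/-!
The risk bound holds with `L₀ = 1000` and `C = 1/40000`. It combines an oracle inequality for the
selected histogram with a bias-variance computation on one uniform dyadic partition.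

**Deviations.** For a partition `m` and real weights `φ`, the process
`exp (∑_{i<k} ∑_{Q ∈ m} (φ_Q 1_Q(X_i, X_{i+1}) - (e^{φ_Q} - 1) ∫ 1_Q(X_i, y) s(X_i, y) dy))`
is a supermartingale: at most one cell of `m` is charged at each step, so the conditional Laplace
transform of an increment is `1 + u` with `u = ∑_Q (e^{φ_Q} - 1) ∫ 1_Q(X_i, y) s(X_i, y) dy`, which
is at most `e^u`. Markov's inequality gives `deviation`. The
value of a histogram estimator on a cube of level at most `n²` belongs to a finite set of at most
`n⁶` elements that does not depend on the path (`coef_mem`, `card_Vset`), and dyadic partitions are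
few when each is weighted by `n^{-2 |m|}` (`part_weight`). A union bound therefore controls, on one
event `Good1` of probability at least `1 - 2/n²`, all test statistics at once (`prob_good1`).

**Oracle inequality.** Cube by cube, the drift of the test statistic is compared with the loss of
`ŝ_m` by an elementary inequality between `√s`, `√b` and `√c` (`pointwise_ineq`). Summing over the
overlay of `m` with the competing partitions, which is again a dyadic partition
(`part_glue`, `overlay_part`), gives `γ(m) ≤ 3 H²(s 1_A, ŝ_m) + 2 pen(m)` on `Good1`
(`gam_le`). When the overlay has more than `n²` cells the penalty alone exceeds the trivial bound
on the statistic, which is why levels up to `n²` suffice. Since the test statistic is antisymmetric,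
`2 α H²(ŝ_m, ŝ_m') ≤ γ(m) + γ(m')` always holds (`hell_le_gam`), and the triangle inequality
yields `oracle`.

**Loss on a fixed partition.** If `√s` takes its values in `[b₀, b₁]` on a cube `K`, the deviation
inequality with weight `log (a / b)` on `K`, where `a² = ŝ_m` on `K` and `b` is one of `b₀`, `b₁`,
together with `log t ≥ 1 - 1/t`, shows that `a` is within distance `O(√(log n / D_K))` of
`[b₀, b₁]`, where `D_K = ∑ᵢ ∫ 1_K(X_i, y) dy` (`cube_loss`). Hence the loss is at most the squared
oscillation of `√s` on the cells plus a multiple of `|m| log n / n` (`loss_le`).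

**Resolution.** On a cube of level `j` a coordinatewise Hölder function oscillates by at most
`2 d M 2^{-jσ}`; `exists_level` balances `4^{dj} log n / n` against the square of this bound.
Finally the loss never exceeds `1` (`loss_le_one`), so the exceptional events contribute at most
their probability, which is smaller than `log n / n`.
-/

open MeasureTheory Real
open scoped ENNReal
noncomputable section
open Classical

/-- Dyadic subinterval of `[0,1]`: `[l/2^j, (l+1)/2^j)`, closed on the right when
`l + 1 = 2^j`. -/
def dyadicI (j l : ℕ) : Set ℝ :=
  if l + 1 = 2 ^ j then Set.Icc ((l : ℝ) / 2 ^ j) 1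
  else Set.Ico ((l : ℝ) / 2 ^ j) (((l : ℝ) + 1) / 2 ^ j)

/-- A dyadic cube of `[0,1]^{2d}` is coded by its level and its multi-index. -/
abbrev CubeIdx (d : ℕ) := ℕ × (Fin (2 * d) → ℕ)

/-- The subset of `[0,1]^{2d}` coded by a cube index. -/
def cubeSet (d : ℕ) (K : CubeIdx d) : Set (Fin (2 * d) → ℝ) :=
  {x | ∀ i, x i ∈ dyadicI K.1 (K.2 i)}

/-- The `4^d` dyadic children (of half side length) of a dyadic cube. -/
def childrenC (d : ℕ) (K : CubeIdx d) : Finset (CubeIdx d) :=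
  (Finset.univ : Finset (Fin (2 * d) → Fin 2)).image
    (fun ε => (K.1 + 1, fun i => 2 * K.2 i + (ε i : ℕ)))

/-- `IsPartOf d ℓ K m` means: `m` is a partition of the dyadic cube `K` into dyadic
cubes, obtained by at most `ℓ` recursive splitting steps (at each step, each current
cube may be split into its `4^d` children). -/
inductive IsPartOf (d : ℕ) : ℕ → CubeIdx d → Finset (CubeIdx d) → Prop
  | leaf (ℓ : ℕ) (K : CubeIdx d) : IsPartOf d ℓ K {K}
  | node (ℓ : ℕ) (K : CubeIdx d) (f : CubeIdx d → Finset (CubeIdx d))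
      (h : ∀ K' ∈ childrenC d K, IsPartOf d ℓ K' (f K')) :
      IsPartOf d (ℓ + 1) K ((childrenC d K).biUnion f)

/-- The root cube, coding `[0,1]^{2d}`. -/
def rootC (d : ℕ) : CubeIdx d := (0, fun _ => 0)

/-- The collection `𝓜_ℓ` of dyadic partitions of `[0,1]^{2d}` built in at most `ℓ` steps. -/
def Mpart (d ℓ : ℕ) : Set (Finset (CubeIdx d)) := {m | IsPartOf d ℓ (rootC d) m}

/-- The collection `𝓜_∞ = ⋃_ℓ 𝓜_ℓ`. -/
def MpartInf (d : ℕ) : Set (Finset (CubeIdx d)) := ⋃ ℓ, Mpart d ℓ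

/-- The collection `𝓜_ℓ` for `ℓ ∈ ℕ ∪ {∞}`. -/
def MpartE (d : ℕ) (ℓ : ℕ∞) : Set (Finset (CubeIdx d)) :=
  if ℓ = ⊤ then MpartInf d else Mpart d ℓ.toNat

/-- Concatenation of two points of `ℝ^d` into a point of `ℝ^{2d}`. -/
def pairPt (d : ℕ) (x y : Fin d → ℝ) : Fin (2 * d) → ℝ :=
  fun i => if h : (i : ℕ) < d then x ⟨i, h⟩
    else y ⟨(i : ℕ) - d, by have := i.isLt; omega⟩

/-- The indicator function `1_K` of a dyadic cube, as a function on `ℝ^d × ℝ^d`. -/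
def indC (d : ℕ) (K : CubeIdx d) (p : (Fin d → ℝ) × (Fin d → ℝ)) : ℝ :=
  (cubeSet d K).indicator (fun _ => (1 : ℝ)) (pairPt d p.1 p.2)

/-- The set `A = [0,1]^d × [0,1]^d` on which the transition density is estimated. -/
def unitSq (d : ℕ) : Set ((Fin d → ℝ) × (Fin d → ℝ)) :=
  (Set.Icc (0 : Fin d → ℝ) 1) ×ˢ (Set.Icc (0 : Fin d → ℝ) 1)

/-- The empirical Hellinger-type squared distance
`H²(f,f') = (1/(2n)) ∑_{i<n} ∫ (√f(X_i,y) - √f'(X_i,y))² dy`. -/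
def hellSq (d : ℕ) {Ω : Type*} (n : ℕ) (X : ℕ → Ω → (Fin d → ℝ)) (ω : Ω)
    (f g : (Fin d → ℝ) × (Fin d → ℝ) → ℝ) : ℝ :=
  (1 / (2 * n)) * ∑ i ∈ Finset.range n,
    ∫ y, (Real.sqrt (f (X i ω, y)) - Real.sqrt (g (X i ω, y))) ^ 2

/-- The test statistic `T(f,f')` (conventions `0/0 = 0` are those of real division). -/
def Tstat (d : ℕ) {Ω : Type*} (n : ℕ) (X : ℕ → Ω → (Fin d → ℝ)) (ω : Ω)
    (f g : (Fin d → ℝ) × (Fin d → ℝ) → ℝ) : ℝ :=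
  (1 / (2 * Real.sqrt 2 * n)) * (∑ i ∈ Finset.range n,
      ∫ y, Real.sqrt (f (X i ω, y) + g (X i ω, y)) *
        (Real.sqrt (g (X i ω, y)) - Real.sqrt (f (X i ω, y))))
  + (1 / (Real.sqrt 2 * n)) * (∑ i ∈ Finset.range n,
      (Real.sqrt (g (X i ω, X (i + 1) ω)) - Real.sqrt (f (X i ω, X (i + 1) ω))) /
        Real.sqrt (f (X i ω, X (i + 1) ω) + g (X i ω, X (i + 1) ω)))
  + (1 / (2 * n)) * (∑ i ∈ Finset.range n,
      ∫ y, (f (X i ω, y) - g (X i ω, y)))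

/-- The histogram estimator `ŝ_m` on a dyadic partition `m` (convention `0/0 = 0`). -/
def histEst (d : ℕ) {Ω : Type*} (n : ℕ) (X : ℕ → Ω → (Fin d → ℝ))
    (m : Finset (CubeIdx d)) (ω : Ω) : (Fin d → ℝ) × (Fin d → ℝ) → ℝ :=
  fun p => ∑ K ∈ m,
    ((∑ i ∈ Finset.range n, indC d K (X i ω, X (i + 1) ω)) /
      (∑ i ∈ Finset.range n, ∫ y, indC d K (X i ω, y))) * indC d K p

/-- The set `V_m` of nonnegative piecewise constant functions on a dyadic partition `m`. -/
def VmD (d : ℕ) (m : Finset (CubeIdx d)) : Set ((Fin d → ℝ) × (Fin d → ℝ) → ℝ) :=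
  {g | ∃ a : CubeIdx d → ℝ, (∀ K ∈ m, 0 ≤ a K) ∧
    g = fun p => ∑ K ∈ m, a K * indC d K p}

/-- `|m' ∨ K|`: the number of nonempty pieces `K' ∩ K`, `K' ∈ m'`. -/
def veeCard (d : ℕ) (m' : Finset (CubeIdx d)) (K : CubeIdx d) : ℕ :=
  ((m'.filter fun K' => (cubeSet d K' ∩ cubeSet d K).Nonempty).image
    fun K' => cubeSet d K' ∩ cubeSet d K).card

/-- The penalty `L ⬝ c ⬝ log n / n` attached to a cardinality `c`. -/
def penC (L : ℝ) (n : ℕ) (c : ℕ) : ℝ := L * c * Real.log n / n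

/-- `α = (1 - 1/√2)/2`. -/
def alphaC : ℝ := (1 - 1 / Real.sqrt 2) / 2

/-- Restriction `f ⬝ 1_{K ∩ K'}`. -/
def restr2 (d : ℕ) (f : (Fin d → ℝ) × (Fin d → ℝ) → ℝ) (K K' : CubeIdx d) :
    (Fin d → ℝ) × (Fin d → ℝ) → ℝ :=
  fun p => f p * indC d K p * indC d K' p

/-- Restriction `f ⬝ 1_K`. -/
def restr1 (d : ℕ) (f : (Fin d → ℝ) × (Fin d → ℝ) → ℝ) (K : CubeIdx d) :
    (Fin d → ℝ) × (Fin d → ℝ) → ℝ :=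
  fun p => f p * indC d K p

/-- The selection criterion `γ`. -/
def gammaSel (d : ℕ) {Ω : Type*} (n : ℕ) (X : ℕ → Ω → (Fin d → ℝ)) (L : ℝ) (ℓ : ℕ∞)
    (ω : Ω) (m : Finset (CubeIdx d)) : ℝ :=
  (∑ K ∈ m, ⨆ m' : MpartE d ℓ,
      ((∑ K' ∈ (m' : Finset (CubeIdx d)),
          (alphaC * hellSq d n X ω (restr2 d (histEst d n X m ω) K K')
                (restr2 d (histEst d n X (m' : Finset (CubeIdx d)) ω) K K')
            + Tstat d n X ω (restr2 d (histEst d n X m ω) K K')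
                (restr2 d (histEst d n X (m' : Finset (CubeIdx d)) ω) K K')))
        - penC L n (veeCard d (m' : Finset (CubeIdx d)) K)))
  + 2 * penC L n m.card

/-- `s ⬝ 1_A`, the target function restricted to `A = [0,1]^{2d}`. -/
def sIndA (d : ℕ) (s : (Fin d → ℝ) → (Fin d → ℝ) → ℝ) :
    (Fin d → ℝ) × (Fin d → ℝ) → ℝ :=
  (unitSq d).indicator fun p => s p.1 p.2

end

noncomputable section
open Classical

/-! ### Dyadic cubes -/

/-- Index of the dyadic interval of level `j` containing `t ∈ [0,1]`; the truncation by
`2 ^ j - 1` accounts for the last interval being closed. -/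
def code (j : ℕ) (t : ℝ) : ℕ := min ⌊t * 2 ^ j⌋₊ (2 ^ j - 1)

lemma code_succ (j : ℕ) (t : ℝ) : code (j + 1) t / 2 = code j t := by
  have h : ⌊t * 2 ^ (j + 1)⌋₊ / 2 = ⌊t * 2 ^ j⌋₊ := by
    have := Nat.floor_div_natCast (t * 2 ^ (j + 1)) 2
    rw [← this]
    congr 1
    push_cast
    ring
  unfold code
  have hp : 0 < 2 ^ j := by positivity
  rw [pow_succ] at *
  omega

lemma code_div (j k : ℕ) (t : ℝ) : code (j + k) t / 2 ^ k = code j t := by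
  induction k with
  | zero => simp
  | succ k ih =>
    rw [← add_assoc, pow_succ', ← Nat.div_div_eq_div_mul, code_succ, ih]

lemma mem_dyadicI {j l : ℕ} (hl : l < 2 ^ j) (t : ℝ) :
    t ∈ dyadicI j l ↔ (0 ≤ t ∧ t ≤ 1) ∧ code j t = l := by
  have hp : (0 : ℝ) < 2 ^ j := by positivity
  unfold dyadicI code
  split_ifs with h
  · rw [Set.mem_Icc, div_le_iff₀ hp]
    have e : 2 ^ j - 1 = l := by omega
    rw [e]
    constructor
    · rintro ⟨h1, h2⟩
      have : l ≤ ⌊t * 2 ^ j⌋₊ := Nat.le_floor h1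
      refine ⟨⟨?_, h2⟩, by omega⟩
      have : 0 ≤ t * 2 ^ j := le_trans (Nat.cast_nonneg l) h1
      exact nonneg_of_mul_nonneg_left this hp
    · rintro ⟨⟨h0, h1⟩, h2⟩
      have : l ≤ ⌊t * 2 ^ j⌋₊ := by omega
      exact ⟨(Nat.le_floor_iff (by positivity)).1 this, h1⟩
  · rw [Set.mem_Ico, div_le_iff₀ hp, lt_div_iff₀ hp]
    have e : min ⌊t * 2 ^ j⌋₊ (2 ^ j - 1) = l ↔ ⌊t * 2 ^ j⌋₊ = l := by omega
    rw [e]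
    constructor
    · rintro ⟨h1, h2⟩
      have h0 : 0 ≤ t * 2 ^ j := le_trans (Nat.cast_nonneg l) h1
      refine ⟨⟨nonneg_of_mul_nonneg_left h0 hp, ?_⟩, (Nat.floor_eq_iff h0).2 ⟨h1, h2⟩⟩
      have h3 : (l : ℝ) + 1 ≤ 2 ^ j := by exact_mod_cast hl
      have : t * 2 ^ j ≤ 1 * 2 ^ j := by linarith
      exact le_of_mul_le_mul_right this hp
    · rintro ⟨⟨h0, h1⟩, h2⟩
      exact (Nat.floor_eq_iff (by positivity)).1 h2

/-- `K` codes an actual cube: its multi-index lies in the grid of its level. -/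
def validC {d : ℕ} (K : CubeIdx d) : Prop := ∀ i, K.2 i < 2 ^ K.1

/-- `K` is an ancestor of `Q` (possibly `Q` itself) in the tree of dyadic cubes. -/
def anc {d : ℕ} (K Q : CubeIdx d) : Prop :=
  K.1 ≤ Q.1 ∧ ∀ i, Q.2 i / 2 ^ (Q.1 - K.1) = K.2 i

variable {d : ℕ}

lemma mem_cube {K : CubeIdx d} (hK : validC K) (z : Fin (2 * d) → ℝ) :
    z ∈ cubeSet d K ↔ (∀ i, 0 ≤ z i ∧ z i ≤ 1) ∧ ∀ i, code K.1 (z i) = K.2 i := by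
  unfold cubeSet
  simp only [Set.mem_ofPred_eq]
  rw [← forall_and]
  exact forall_congr' fun i => mem_dyadicI (hK i) _

lemma anc_refl (K : CubeIdx d) : anc K K := ⟨le_rfl, by simp⟩

lemma anc_trans {K Q R : CubeIdx d} (h1 : anc K Q) (h2 : anc Q R) : anc K R := by
  refine ⟨h1.1.trans h2.1, fun i => ?_⟩
  rw [← h1.2 i, ← h2.2 i, Nat.div_div_eq_div_mul, ← pow_add]
  congr 2
  have := h1.1; have := h2.1; omega

lemma anc_of_common {K K' Q : CubeIdx d} (h1 : anc K Q) (h2 : anc K' Q) (h : K.1 ≤ K'.1) :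
    anc K K' := by
  refine ⟨h, fun i => ?_⟩
  rw [← h1.2 i, ← h2.2 i, Nat.div_div_eq_div_mul, ← pow_add]
  congr 2
  have := h1.1; have := h2.1; omega

lemma anc_eq {K Q : CubeIdx d} (h : anc K Q) (h' : Q.1 ≤ K.1) : K = Q := by
  have e : K.1 = Q.1 := le_antisymm h.1 h'
  refine Prod.ext e (funext fun i => ?_)
  rw [← h.2 i, e]; simp

lemma anc_of_inter {K Q : CubeIdx d} (hK : validC K) (hQ : validC Q) (h : K.1 ≤ Q.1)
    {z : Fin (2 * d) → ℝ} (h1 : z ∈ cubeSet d K) (h2 : z ∈ cubeSet d Q) : anc K Q := by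
  refine ⟨h, fun i => ?_⟩
  rw [← ((mem_cube hK z).1 h1).2 i, ← ((mem_cube hQ z).1 h2).2 i]
  conv_lhs => rw [← Nat.add_sub_cancel' h]
  rw [Nat.add_sub_cancel_left, code_div]

lemma subset_of_anc {K Q : CubeIdx d} (hK : validC K) (hQ : validC Q) (h : anc K Q) :
    cubeSet d Q ⊆ cubeSet d K := by
  intro z hz
  rw [mem_cube hQ] at hz
  rw [mem_cube hK]
  refine ⟨hz.1, fun i => ?_⟩
  rw [← h.2 i, ← hz.2 i]
  conv_rhs => rw [← Nat.add_sub_cancel' h.1]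
  rw [Nat.add_sub_cancel_left, code_div]

lemma cube_nonempty {K : CubeIdx d} (hK : validC K) : (cubeSet d K).Nonempty := by
  refine ⟨fun i => (K.2 i : ℝ) / 2 ^ K.1, (mem_cube hK _).2 ⟨fun i => ⟨by positivity, ?_⟩, ?_⟩⟩
  · rw [div_le_one (by positivity)]
    exact_mod_cast (hK i).le
  · intro i
    have := hK i
    unfold code
    rw [div_mul_cancel₀ _ (by positivity), Nat.floor_natCast]
    omega

lemma mem_children {K c : CubeIdx d} : c ∈ childrenC d K ↔ c.1 = K.1 + 1 ∧ anc K c := by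
  unfold childrenC anc
  simp only [Finset.mem_image, Finset.mem_univ, true_and]
  constructor
  · rintro ⟨ε, rfl⟩
    refine ⟨rfl, by simp, fun i => ?_⟩
    have := (ε i).isLt
    simp only [Nat.add_sub_cancel_left, pow_one]
    omega
  · rintro ⟨h, h1, h2⟩
    refine ⟨fun i => ⟨c.2 i % 2, Nat.mod_lt _ (by norm_num)⟩, Prod.ext h.symm (funext fun i => ?_)⟩
    have := h2 i
    rw [h, Nat.add_sub_cancel_left, pow_one] at this
    simp only
    omega

lemma valid_child {K c : CubeIdx d} (hK : validC K) (hc : c ∈ childrenC d K) : validC c := by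
  rw [mem_children] at hc
  intro i
  have h1 := hc.2.2 i
  have h2 := hK i
  rw [hc.1] at *
  rw [Nat.add_sub_cancel_left, pow_one] at h1
  rw [pow_succ]; omega

lemma child_exists {K Q : CubeIdx d} (h : anc K Q) (hlt : K.1 < Q.1) :
    ∃ c ∈ childrenC d K, anc c Q := by
  have hc : anc (K.1 + 1, fun i => Q.2 i / 2 ^ (Q.1 - (K.1 + 1))) Q := ⟨hlt, fun i => rfl⟩
  exact ⟨_, mem_children.2 ⟨rfl, anc_of_common h hc (Nat.le_succ _)⟩, hc⟩

lemma child_unique {K c c' Q : CubeIdx d} (hc : c ∈ childrenC d K) (hc' : c' ∈ childrenC d K)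
    (h : anc c Q) (h' : anc c' Q) : c = c' := by
  rw [mem_children] at hc hc'
  exact anc_eq (anc_of_common h h' (by omega)) (by omega)

lemma child_cover {K : CubeIdx d} (hK : validC K) {z : Fin (2 * d) → ℝ} (hz : z ∈ cubeSet d K) :
    ∃ c ∈ childrenC d K, z ∈ cubeSet d c := by
  have hm := (mem_cube hK z).1 hz
  have hc : (K.1 + 1, fun i => code (K.1 + 1) (z i)) ∈ childrenC d K := by
    refine mem_children.2 ⟨rfl, Nat.le_succ _, fun i => ?_⟩
    simp only [Nat.add_sub_cancel_left, pow_one]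
    rw [code_succ, hm.2]
  exact ⟨_, hc, (mem_cube (valid_child hK hc) z).2 ⟨hm.1, fun i => rfl⟩⟩

lemma card_children (K : CubeIdx d) : (childrenC d K).card = 4 ^ d := by
  unfold childrenC
  rw [Finset.card_image_of_injective]
  · simp [pow_mul]
  · intro ε ε' h
    funext i
    have := congrFun (Prod.ext_iff.1 h).2 i
    simp only at this
    ext; omega

/-! ### Dyadic partitions -/

lemma part_anc {ℓ : ℕ} {K : CubeIdx d} {m : Finset (CubeIdx d)} (h : IsPartOf d ℓ K m) :
    ∀ Q ∈ m, anc K Q ∧ Q.1 ≤ K.1 + ℓ := by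
  induction h with
  | leaf ℓ K => intro Q hQ; rw [Finset.mem_singleton] at hQ; subst hQ; exact ⟨anc_refl _, by omega⟩
  | node ℓ K f _ ih =>
    intro Q hQ
    obtain ⟨c, hc, hQ⟩ := Finset.mem_biUnion.1 hQ
    have := ih c hc Q hQ
    have h2 := mem_children.1 hc
    exact ⟨anc_trans h2.2 this.1, by omega⟩

lemma part_valid {ℓ : ℕ} {K : CubeIdx d} {m : Finset (CubeIdx d)} (h : IsPartOf d ℓ K m)
    (hK : validC K) : ∀ Q ∈ m, validC Q := by
  induction h with
  | leaf ℓ K => intro Q hQ; rw [Finset.mem_singleton] at hQ; subst hQ; exact hK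
  | node ℓ K f _ ih =>
    intro Q hQ
    obtain ⟨c, hc, hQ⟩ := Finset.mem_biUnion.1 hQ
    exact ih c hc (valid_child hK hc) Q hQ

lemma part_unique {ℓ : ℕ} {K : CubeIdx d} {m : Finset (CubeIdx d)} (h : IsPartOf d ℓ K m) :
    ∀ Q ∈ m, ∀ Q' ∈ m, anc Q Q' → Q = Q' := by
  induction h with
  | leaf ℓ K => simp
  | node ℓ K f hf ih =>
    intro Q hQ Q' hQ' ha
    obtain ⟨c, hc, hQ⟩ := Finset.mem_biUnion.1 hQ
    obtain ⟨c', hc', hQ'⟩ := Finset.mem_biUnion.1 hQ'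
    have : c = c' := child_unique hc hc' (anc_trans (part_anc (hf c hc) Q hQ).1 ha)
      (part_anc (hf c' hc') Q' hQ').1
    subst this
    exact ih c hc Q hQ Q' hQ' ha

/-- Two members of a partition having a common descendant coincide. -/
lemma part_unique' {ℓ : ℕ} {K : CubeIdx d} {m : Finset (CubeIdx d)} (h : IsPartOf d ℓ K m)
    {Q Q' R : CubeIdx d} (hQ : Q ∈ m) (hQ' : Q' ∈ m) (h1 : anc Q R) (h2 : anc Q' R) : Q = Q' := by
  rcases le_total Q.1 Q'.1 with hl | hl
  · exact part_unique h Q hQ Q' hQ' (anc_of_common h1 h2 hl)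
  · exact (part_unique h Q' hQ' Q hQ (anc_of_common h2 h1 hl)).symm

lemma part_cover {ℓ : ℕ} {K : CubeIdx d} {m : Finset (CubeIdx d)} (h : IsPartOf d ℓ K m)
    (hK : validC K) : ∀ z ∈ cubeSet d K, ∃ Q ∈ m, z ∈ cubeSet d Q := by
  induction h with
  | leaf ℓ K => intro z hz; exact ⟨K, by simp, hz⟩
  | node ℓ K f hf ih =>
    intro z hz
    obtain ⟨c, hc, hz⟩ := child_cover hK hz
    obtain ⟨Q, hQ, hz⟩ := ih c hc (valid_child hK hc) z hz
    exact ⟨Q, Finset.mem_biUnion.2 ⟨c, hc, hQ⟩, hz⟩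

lemma part_inter {ℓ : ℕ} {K : CubeIdx d} {m : Finset (CubeIdx d)} (h : IsPartOf d ℓ K m)
    (hK : validC K) {Q Q' : CubeIdx d} (hQ : Q ∈ m) (hQ' : Q' ∈ m) {z : Fin (2 * d) → ℝ}
    (h1 : z ∈ cubeSet d Q) (h2 : z ∈ cubeSet d Q') : Q = Q' := by
  have v := part_valid h hK Q hQ
  have v' := part_valid h hK Q' hQ'
  rcases le_total Q.1 Q'.1 with hl | hl
  · exact part_unique h Q hQ Q' hQ' (anc_of_inter v v' hl h1 h2)
  · exact (part_unique h Q' hQ' Q hQ (anc_of_inter v' v hl h2 h1)).symm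

lemma part_nonempty {ℓ : ℕ} {K : CubeIdx d} {m : Finset (CubeIdx d)} (h : IsPartOf d ℓ K m) :
    m.Nonempty := by
  induction h with
  | leaf ℓ K => simp
  | node ℓ K f hf ih =>
    have : (childrenC d K).Nonempty := by
      rw [← Finset.card_pos, card_children]; positivity
    obtain ⟨c, hc⟩ := this
    obtain ⟨Q, hQ⟩ := ih c hc
    exact ⟨Q, Finset.mem_biUnion.2 ⟨c, hc, hQ⟩⟩

lemma part_mono {ℓ : ℕ} {K : CubeIdx d} {m : Finset (CubeIdx d)} (h : IsPartOf d ℓ K m) :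
    ∀ ℓ', ℓ ≤ ℓ' → IsPartOf d ℓ' K m := by
  induction h with
  | leaf ℓ K => intro ℓ' _; exact .leaf ℓ' K
  | node ℓ K f hf ih =>
    intro ℓ' hl
    obtain ⟨k, rfl⟩ : ∃ k, ℓ' = k + 1 := ⟨ℓ' - 1, by omega⟩
    exact .node k K f fun c hc => ih c hc k (by omega)

lemma part_disj {ℓ : ℕ} {K : CubeIdx d} {f : CubeIdx d → Finset (CubeIdx d)}
    (hf : ∀ c ∈ childrenC d K, IsPartOf d ℓ c (f c)) :
    ((childrenC d K : Finset (CubeIdx d)) : Set (CubeIdx d)).PairwiseDisjoint f := by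
  intro c hc c' hc' hne
  rw [Function.onFun, Finset.disjoint_left]
  intro Q hQ hQ'
  exact hne (child_unique hc hc' (part_anc (hf c hc) Q hQ).1 (part_anc (hf c' hc') Q hQ').1)

/-- A dyadic partition with `N` cubes is built in at most `N` steps. -/
lemma part_depth (hd : 0 < d) {ℓ : ℕ} {K : CubeIdx d} {m : Finset (CubeIdx d)}
    (h : IsPartOf d ℓ K m) : IsPartOf d m.card K m := by
  induction h with
  | leaf ℓ K => exact .leaf _ K
  | node ℓ K f hf ih =>
    have hcard : ((childrenC d K).biUnion f).card = ∑ c ∈ childrenC d K, (f c).card :=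
      Finset.card_biUnion (part_disj hf)
    have h4 : 1 < (childrenC d K).card := by
      rw [card_children]; exact Nat.one_lt_pow hd.ne' (by norm_num)
    have key : ∀ c ∈ childrenC d K, (f c).card + 1 ≤ ((childrenC d K).biUnion f).card := by
      intro c hc
      obtain ⟨c', hc', hne⟩ := Finset.exists_mem_ne h4 c
      rw [hcard]
      have h1 : 1 ≤ (f c').card := Finset.card_pos.2 (part_nonempty (hf c' hc'))
      have h2 : (f c).card + (f c').card ≤ ∑ c ∈ childrenC d K, (f c).card := by
        refine ((Finset.sum_pair (f := fun c => (f c).card) hne.symm).symm.le).trans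
          (Finset.sum_le_sum_of_subset ?_)
        intro a ha
        simp only [Finset.mem_insert, Finset.mem_singleton] at ha
        rcases ha with rfl | rfl <;> assumption
      omega
    obtain ⟨c, hc⟩ : (childrenC d K).Nonempty := Finset.card_pos.1 (by omega)
    obtain ⟨k, hk⟩ : ∃ k, ((childrenC d K).biUnion f).card = k + 1 :=
      ⟨_, (Nat.sub_add_cancel (by have := key c hc; omega)).symm⟩
    rw [hk]
    exact .node k K f fun c hc => part_mono (ih c hc) k (by have := key c hc; omega)

/-- Restricting a partition of `R` to a cube `K` of `R` gives either `K` itself, contained in one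
cube of the partition, or a partition of `K`. -/
lemma part_filter {ℓ : ℕ} {R : CubeIdx d} {m : Finset (CubeIdx d)} (h : IsPartOf d ℓ R m)
    {K : CubeIdx d} : anc R K →
    (∃ K' ∈ m, anc K' K) ∨ IsPartOf d ℓ K (m.filter fun Q => anc K Q) := by
  induction h with
  | leaf ℓ R => intro h; exact Or.inl ⟨R, by simp, h⟩
  | node ℓ R f hf ih =>
    intro h
    by_cases hl : K.1 ≤ R.1
    · right
      have e := anc_eq h hl
      subst e
      have hn : IsPartOf d (ℓ + 1) R ((childrenC d R).biUnion f) := .node ℓ R f hf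
      rw [Finset.filter_true_of_mem (fun Q hQ => (part_anc hn Q hQ).1)]
      exact hn
    · obtain ⟨c, hc, hcK⟩ := child_exists h (not_le.1 hl)
      rcases ih c hc hcK with ⟨K', hK', ha⟩ | hp
      · exact Or.inl ⟨K', Finset.mem_biUnion.2 ⟨c, hc, hK'⟩, ha⟩
      · right
        have e : ((childrenC d R).biUnion f).filter (fun Q => anc K Q)
            = (f c).filter fun Q => anc K Q := by
          ext Q
          simp only [Finset.mem_filter, Finset.mem_biUnion]
          constructor
          · rintro ⟨⟨c', hc', hQ⟩, ha⟩
            have : c' = c := child_unique hc' hc (part_anc (hf c' hc') Q hQ).1 (anc_trans hcK ha)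
            subst this
            exact ⟨hQ, ha⟩
          · rintro ⟨hQ, ha⟩
            exact ⟨⟨c, hc, hQ⟩, ha⟩
        rw [e]
        exact part_mono hp _ (Nat.le_succ _)

lemma part_glue {ℓ ℓ' : ℕ} {R : CubeIdx d} {m : Finset (CubeIdx d)} (h : IsPartOf d ℓ R m)
    (p : CubeIdx d → Finset (CubeIdx d)) :
    (∀ K ∈ m, IsPartOf d ℓ' K (p K)) → IsPartOf d (ℓ + ℓ') R (m.biUnion p) := by
  induction h with
  | leaf ℓ R =>
    intro h
    rw [Finset.singleton_biUnion]
    exact part_mono (h R (by simp)) _ (by omega)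
  | node ℓ R f hf ih =>
    intro h
    rw [Finset.biUnion_biUnion]
    have := IsPartOf.node (ℓ + ℓ') R (fun c => (f c).biUnion p) (fun c hc =>
      ih c hc fun K hK => h K (Finset.mem_biUnion.2 ⟨c, hc, hK⟩))
    exact part_mono this _ (by omega)

lemma valid_root : validC (rootC d) := by intro i; simp [rootC]

/-- The uniform partition into cubes of level `j`. -/
lemma part_uniform (j : ℕ) (K : CubeIdx d) :
    ∃ m, IsPartOf d j K m ∧ m.card ≤ 4 ^ (d * j) ∧ ∀ Q ∈ m, Q.1 = K.1 + j := by
  induction j generalizing K with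
  | zero => exact ⟨{K}, .leaf _ _, by simp, by simp⟩
  | succ j ih =>
    choose f hf using ih
    refine ⟨(childrenC d K).biUnion f, .node j K f fun c _ => (hf c).1, ?_, ?_⟩
    · refine (Finset.card_biUnion_le_card_mul _ _ _ fun c _ => (hf c).2.1).trans ?_
      rw [card_children, ← pow_add]
      apply le_of_eq; congr 1; ring
    · intro Q hQ
      obtain ⟨c, hc, hQ⟩ := Finset.mem_biUnion.1 hQ
      have := (hf c).2.2 Q hQ
      have := (mem_children.1 hc).1
      omega

/-- The dyadic partitions of `K` built in at most `ℓ` steps form a finite family, and the total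
weight of that family is small when each cube of a partition carries the weight `w ≤ 1/4`. This is
the entropy estimate that replaces counting trees: with `G` the total weight at depth `ℓ`, the
total weight at depth `ℓ + 1` is at most `w + G ^ (4 ^ d)`. -/
lemma part_weight (hd : 0 < d) {w : ℝ} (hw0 : 0 ≤ w) (hw : w ≤ 1 / 4) (ℓ : ℕ) (K : CubeIdx d) :
    ∃ F : Finset (Finset (CubeIdx d)), (∀ m, IsPartOf d ℓ K m ↔ m ∈ F) ∧
      ∑ m ∈ F, w ^ m.card ≤ 2 * w := by
  induction ℓ generalizing K with
  | zero =>
    refine ⟨{{K}}, fun m => ?_, by simp; linarith⟩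
    rw [Finset.mem_singleton]
    constructor
    · rintro ⟨⟩; rfl
    · rintro rfl; exact .leaf _ _
  | succ ℓ ih =>
    choose F hF hsum using ih
    let S : Finset (Finset (CubeIdx d)) := ((childrenC d K).pi F).image
      fun p => (childrenC d K).attach.biUnion fun c => p c.1 c.2
    have hbi : ∀ p ∈ (childrenC d K).pi F, ∃ f : CubeIdx d → Finset (CubeIdx d),
        (∀ c ∈ childrenC d K, IsPartOf d ℓ c (f c)) ∧ (∀ c (hc : c ∈ childrenC d K), f c = p c hc) ∧
        (childrenC d K).attach.biUnion (fun c => p c.1 c.2) = (childrenC d K).biUnion f := by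
      intro p hp
      rw [Finset.mem_pi] at hp
      refine ⟨fun c => if hc : c ∈ childrenC d K then p c hc else ∅, fun c hc => ?_,
        fun c hc => by simp [hc], ?_⟩
      · simp only [hc, dite_true]; exact (hF c _).2 (hp c hc)
      · ext Q
        simp only [Finset.mem_biUnion, Finset.mem_attach, true_and, Subtype.exists]
        constructor
        · rintro ⟨c, hc, hQ⟩; exact ⟨c, hc, by simpa [hc] using hQ⟩
        · rintro ⟨c, hc, hQ⟩; exact ⟨c, hc, by simpa [hc] using hQ⟩
    refine ⟨insert {K} S, fun m => ?_, ?_⟩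
    · rw [Finset.mem_insert]
      constructor
      · intro h
        cases h with
        | leaf => exact Or.inl rfl
        | node _ _ f hf =>
          right
          refine Finset.mem_image.2 ⟨fun c _ => f c, Finset.mem_pi.2 fun c hc =>
            (hF c _).1 (hf c hc), ?_⟩
          ext Q; simp
      · rintro (rfl | h)
        · exact .leaf _ _
        · obtain ⟨p, hp, rfl⟩ := Finset.mem_image.1 h
          obtain ⟨f, hf, -, he⟩ := hbi p hp
          rw [he]
          exact .node ℓ K f hf
    · have h1 : ∑ m ∈ insert {K} S, w ^ m.card ≤ w + ∑ m ∈ S, w ^ m.card := by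
        by_cases hm : {K} ∈ S
        · rw [Finset.insert_eq_of_mem hm]; linarith
        · rw [Finset.sum_insert hm]; simp
      have h2 : ∑ m ∈ S, w ^ m.card ≤ ∑ p ∈ (childrenC d K).pi F,
          w ^ ((childrenC d K).attach.biUnion fun c => p c.1 c.2).card :=
        Finset.sum_image_le_of_nonneg (fun _ _ => by positivity)
      have h3 : ∑ p ∈ (childrenC d K).pi F,
          w ^ ((childrenC d K).attach.biUnion fun c => p c.1 c.2).card
          = ∏ c ∈ childrenC d K, ∑ m ∈ F c, w ^ m.card := by
        rw [Finset.prod_sum]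
        refine Finset.sum_congr rfl fun p hp => ?_
        obtain ⟨f, hf, hfp, he⟩ := hbi p hp
        rw [he, Finset.card_biUnion (part_disj hf), ← Finset.prod_pow_eq_pow_sum,
          ← Finset.prod_attach]
        exact Finset.prod_congr rfl fun c _ => by rw [hfp c.1 c.2]
      have h4 : ∏ c ∈ childrenC d K, ∑ m ∈ F c, w ^ m.card ≤ (2 * w) ^ (4 ^ d) := by
        rw [← card_children K, ← Finset.prod_const]
        exact Finset.prod_le_prod (fun c _ => Finset.sum_nonneg fun m _ => by positivity)
          fun c _ => hsum c
      have h5 : (2 * w) ^ (4 ^ d) ≤ (2 * w) ^ 4 := by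
        refine pow_le_pow_of_le_one (by linarith) (by linarith) ?_
        calc 4 = 4 ^ 1 := by norm_num
          _ ≤ 4 ^ d := Nat.pow_le_pow_right (by norm_num) hd
      have h6 : (2 * w) ^ 4 ≤ w := by
        have h7 : w ^ 3 ≤ (1 / 4) ^ 3 := by gcongr
        nlinarith [h7]
      linarith

end

noncomputable section
open Classical

variable {d : ℕ}

/-! ### Indicators of cubes and overlays of partitions -/

lemma indC_eq (K : CubeIdx d) (p : (Fin d → ℝ) × (Fin d → ℝ)) :
    indC d K p = if pairPt d p.1 p.2 ∈ cubeSet d K then 1 else 0 := by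
  simp [indC, Set.indicator_apply]

lemma indC_nonneg (K : CubeIdx d) (p : (Fin d → ℝ) × (Fin d → ℝ)) : 0 ≤ indC d K p := by
  rw [indC_eq]; split_ifs <;> norm_num

lemma indC_le_one (K : CubeIdx d) (p : (Fin d → ℝ) × (Fin d → ℝ)) : indC d K p ≤ 1 := by
  rw [indC_eq]; split_ifs <;> norm_num

/-- The indicators of the cubes of a partition, applied to cube-dependent quantities. -/
lemma part_sum_mul {ℓ : ℕ} {K : CubeIdx d} {m : Finset (CubeIdx d)} (h : IsPartOf d ℓ K m)
    (hK : validC K) (p : (Fin d → ℝ) × (Fin d → ℝ)) {Q : CubeIdx d} (hQ : Q ∈ m)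
    (hp : indC d Q p ≠ 0) (F : CubeIdx d → ℝ) : ∑ Q' ∈ m, F Q' * indC d Q' p = F Q := by
  have hz : pairPt d p.1 p.2 ∈ cubeSet d Q := by
    by_contra hc; exact hp (by rw [indC_eq, if_neg hc])
  rw [Finset.sum_eq_single Q]
  · rw [indC_eq, if_pos hz, mul_one]
  · intro Q' hQ' hne
    rw [indC_eq, if_neg, mul_zero]
    exact fun hc => hne (part_inter h hK hQ' hQ hc hz)
  · exact fun hc => absurd hQ hc

lemma part_sum {ℓ : ℕ} {K : CubeIdx d} {m : Finset (CubeIdx d)} (h : IsPartOf d ℓ K m)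
    (hK : validC K) (p : (Fin d → ℝ) × (Fin d → ℝ)) : ∑ Q ∈ m, indC d Q p = indC d K p := by
  by_cases hz : pairPt d p.1 p.2 ∈ cubeSet d K
  · obtain ⟨Q, hQ, hz'⟩ := part_cover h hK _ hz
    have := part_sum_mul h hK p hQ (by rw [indC_eq, if_pos hz']; norm_num) (fun _ => 1)
    simp only [one_mul] at this
    rw [this, indC_eq, if_pos hz]
  · rw [indC_eq, if_neg hz]
    refine Finset.sum_eq_zero fun Q hQ => ?_
    rw [indC_eq, if_neg]
    exact fun hc => hz (subset_of_anc hK (part_valid h hK Q hQ) (part_anc h Q hQ).1 hc)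

lemma indC_mul_anc {K Q : CubeIdx d} (hK : validC K) (hQ : validC Q) (h : anc K Q)
    (p : (Fin d → ℝ) × (Fin d → ℝ)) : indC d K p * indC d Q p = indC d Q p := by
  simp only [indC_eq]
  by_cases hz : pairPt d p.1 p.2 ∈ cubeSet d Q
  · rw [if_pos hz, if_pos (subset_of_anc hK hQ h hz), one_mul]
  · rw [if_neg hz, mul_zero]

lemma indC_mul_zero {K Q : CubeIdx d} (hK : validC K) (hQ : validC Q) (h : ¬ anc K Q)
    (h' : ¬ anc Q K) (p : (Fin d → ℝ) × (Fin d → ℝ)) : indC d K p * indC d Q p = 0 := by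
  simp only [indC_eq]
  by_cases hz : pairPt d p.1 p.2 ∈ cubeSet d Q
  · by_cases hz' : pairPt d p.1 p.2 ∈ cubeSet d K
    · rcases le_total K.1 Q.1 with hl | hl
      · exact absurd (anc_of_inter hK hQ hl hz' hz) h
      · exact absurd (anc_of_inter hQ hK hl hz hz') h'
    · rw [if_neg hz', zero_mul]
  · rw [if_neg hz, mul_zero]

/-- The trace of the partition `m'` on the cube `K`, coded by cubes. -/
def overlay (m' : Finset (CubeIdx d)) (K : CubeIdx d) : Finset (CubeIdx d) :=
  if ∃ K' ∈ m', anc K' K then {K} else m'.filter fun Q => anc K Q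

/-- The cube of `m'` containing `Q`, when there is one. -/
def own (m' : Finset (CubeIdx d)) (Q : CubeIdx d) : CubeIdx d :=
  if h : ∃ K' ∈ m', anc K' Q then h.choose else Q

lemma own_eq {ℓ : ℕ} {R : CubeIdx d} {m : Finset (CubeIdx d)} (h : IsPartOf d ℓ R m)
    {K Q : CubeIdx d} (hK : K ∈ m) (ha : anc K Q) : own m Q = K := by
  have hex : ∃ K' ∈ m, anc K' Q := ⟨K, hK, ha⟩
  unfold own
  rw [dif_pos hex]
  exact part_unique' h hex.choose_spec.1 hK hex.choose_spec.2 ha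

lemma overlay_part {ℓ : ℕ} {R : CubeIdx d} {m : Finset (CubeIdx d)} (h : IsPartOf d ℓ R m)
    {K : CubeIdx d} (ha : anc R K) : IsPartOf d ℓ K (overlay m K) := by
  unfold overlay
  split_ifs with hc
  · exact .leaf _ _
  · exact (part_filter h ha).resolve_left hc

lemma overlay_own {ℓ : ℕ} {R : CubeIdx d} {m : Finset (CubeIdx d)} (h : IsPartOf d ℓ R m)
    {K Q : CubeIdx d} (hQ : Q ∈ overlay m K) : own m Q ∈ m ∧ anc (own m Q) Q := by
  unfold overlay at hQ
  split_ifs at hQ with hc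
  · obtain ⟨K', hK', ha⟩ := hc
    rw [Finset.mem_singleton] at hQ
    subst hQ
    rw [own_eq h hK' ha]
    exact ⟨hK', ha⟩
  · have hm := (Finset.mem_filter.1 hQ).1
    rw [own_eq h hm (anc_refl _)]
    exact ⟨hm, anc_refl _⟩

lemma overlay_sum {ℓ : ℕ} {R : CubeIdx d} {m : Finset (CubeIdx d)} (h : IsPartOf d ℓ R m)
    (hR : validC R) {K : CubeIdx d} (hK : validC K)
    (H : CubeIdx d → ((Fin d → ℝ) × (Fin d → ℝ) → ℝ) → ℝ) (H0 : ∀ K', H K' 0 = 0) :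
    ∑ K' ∈ m, H K' (fun p => indC d K p * indC d K' p)
      = ∑ Q ∈ overlay m K, H (own m Q) (indC d Q) := by
  have hv := part_valid h hR
  unfold overlay
  split_ifs with hc
  · obtain ⟨K', hK', hK'a⟩ := hc
    rw [Finset.sum_singleton, own_eq h hK' hK'a, Finset.sum_eq_single K']
    · congr 1; funext p; rw [mul_comm]; exact indC_mul_anc (hv _ hK') hK hK'a p
    · intro Q hQ hne
      have hz : (fun p => indC d K p * indC d Q p) = 0 := by
        funext p
        refine indC_mul_zero hK (hv Q hQ) (fun hh => ?_) (fun hh => ?_) p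
        · exact hne (part_unique h K' hK' Q hQ (anc_trans hK'a hh)).symm
        · exact hne (part_unique' h hQ hK' hh hK'a)
      rw [hz, H0]
    · exact fun hh => absurd hK' hh
  · rw [Finset.sum_filter]
    refine Finset.sum_congr rfl fun Q hQ => ?_
    split_ifs with hKQ
    · rw [own_eq h hQ (anc_refl _)]
      congr 1; funext p; exact indC_mul_anc hK (hv Q hQ) hKQ p
    · have hz : (fun p => indC d K p * indC d Q p) = 0 := by
        funext p
        exact indC_mul_zero hK (hv Q hQ) hKQ (fun hh => hc ⟨Q, hQ, hh⟩) p
      rw [hz, H0]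

lemma inter_nonempty_iff {K Q : CubeIdx d} (hK : validC K) (hQ : validC Q) :
    (cubeSet d Q ∩ cubeSet d K).Nonempty ↔ anc Q K ∨ anc K Q := by
  constructor
  · rintro ⟨z, h1, h2⟩
    rcases le_total Q.1 K.1 with hl | hl
    · exact Or.inl (anc_of_inter hQ hK hl h1 h2)
    · exact Or.inr (anc_of_inter hK hQ hl h2 h1)
  · rintro (h | h)
    · obtain ⟨z, hz⟩ := cube_nonempty hK
      exact ⟨z, subset_of_anc hQ hK h hz, hz⟩
    · obtain ⟨z, hz⟩ := cube_nonempty hQ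
      exact ⟨z, hz, subset_of_anc hK hQ h hz⟩

lemma veeCard_eq {ℓ : ℕ} {R : CubeIdx d} {m : Finset (CubeIdx d)} (h : IsPartOf d ℓ R m)
    (hR : validC R) {K : CubeIdx d} (hK : validC K) :
    veeCard d m K = (m.filter fun Q => anc Q K ∨ anc K Q).card := by
  unfold veeCard
  rw [Finset.card_image_of_injOn]
  · congr 1
    exact Finset.filter_congr fun Q hQ => inter_nonempty_iff hK (part_valid h hR Q hQ)
  · intro Q hQ Q' hQ' he
    simp only [Finset.coe_filter, Set.mem_ofPred_eq] at hQ hQ' he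
    obtain ⟨z, hz⟩ := hQ.2
    have hz' := hz
    rw [he] at hz'
    exact part_inter h hR hQ.1 hQ'.1 hz.1 hz'.1

lemma overlay_card {ℓ : ℕ} {R : CubeIdx d} {m : Finset (CubeIdx d)} (h : IsPartOf d ℓ R m)
    (hR : validC R) {K : CubeIdx d} (hK : validC K) : (overlay m K).card ≤ veeCard d m K := by
  rw [veeCard_eq h hR hK]
  unfold overlay
  split_ifs with hc
  · obtain ⟨K', hK', ha⟩ := hc
    rw [Finset.card_singleton]
    exact Finset.card_pos.2 ⟨K', Finset.mem_filter.2 ⟨hK', Or.inl ha⟩⟩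
  · refine Finset.card_le_card fun Q hQ => ?_
    rw [Finset.mem_filter] at *
    exact ⟨hQ.1, Or.inr hQ.2⟩

lemma veeCard_self {ℓ : ℕ} {R : CubeIdx d} {m : Finset (CubeIdx d)} (h : IsPartOf d ℓ R m)
    (hR : validC R) {K : CubeIdx d} (hK : K ∈ m) : veeCard d m K = 1 := by
  rw [veeCard_eq h hR (part_valid h hR K hK), Finset.card_eq_one]
  refine ⟨K, ?_⟩
  ext Q
  rw [Finset.mem_filter, Finset.mem_singleton]
  constructor
  · rintro ⟨hQ, ha | ha⟩
    · exact part_unique h Q hQ K hK ha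
    · exact (part_unique h K hK Q hQ ha).symm
  · rintro rfl
    exact ⟨hK, Or.inl (anc_refl _)⟩

/-- The common refinement of two dyadic partitions has at most `|m| + |m'|` cubes. -/
lemma sum_veeCard_le {ℓ ℓ' : ℕ} {R : CubeIdx d} {m m' : Finset (CubeIdx d)}
    (h : IsPartOf d ℓ R m) (h' : IsPartOf d ℓ' R m') (hR : validC R) :
    ∑ K ∈ m, veeCard d m' K ≤ m.card + m'.card := by
  have hle : ∀ K ∈ m, veeCard d m' K ≤
      (m'.filter fun Q => anc Q K).card + (m'.filter fun Q => anc K Q).card := by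
    intro K hK
    rw [veeCard_eq h' hR (part_valid h hR K hK), Finset.filter_or]
    exact Finset.card_union_le _ _
  refine (Finset.sum_le_sum hle).trans ?_
  rw [Finset.sum_add_distrib]
  refine add_le_add ?_ ?_
  · rw [Finset.card_eq_sum_ones]
    refine Finset.sum_le_sum fun K hK => ?_
    rw [Finset.card_le_one]
    intro Q hQ Q' hQ'
    rw [Finset.mem_filter] at hQ hQ'
    exact part_unique' h' hQ.1 hQ'.1 hQ.2 hQ'.2
  · rw [← Finset.card_biUnion]
    · exact Finset.card_le_card fun Q hQ => by
        obtain ⟨K, hK, hQ⟩ := Finset.mem_biUnion.1 hQ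
        exact (Finset.mem_filter.1 hQ).1
    · intro K hK K' hK' hne
      rw [Function.onFun, Finset.disjoint_left]
      intro Q hQ hQ'
      exact hne (part_unique' h hK hK' (Finset.mem_filter.1 hQ).2 (Finset.mem_filter.1 hQ').2)

/-! ### Measurability and integrals of indicators -/

lemma left_lt (i : Fin d) : (i : ℕ) < 2 * d :=
  i.isLt.trans_le (Nat.le_mul_of_pos_left d Nat.two_pos)

lemma right_lt (i : Fin d) : d + (i : ℕ) < 2 * d :=
  (Nat.add_lt_add_left i.isLt d).trans_eq (Nat.two_mul d).symm

/-- Projection of a cube on the first `d` coordinates. -/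
def cubeL (K : CubeIdx d) : Set (Fin d → ℝ) :=
  Set.univ.pi fun i => dyadicI K.1 (K.2 ⟨i, left_lt i⟩)

/-- Projection of a cube on the last `d` coordinates. -/
def cubeR (K : CubeIdx d) : Set (Fin d → ℝ) :=
  Set.univ.pi fun i => dyadicI K.1 (K.2 ⟨d + i, right_lt i⟩)

lemma pairPt_left (x y : Fin d → ℝ) (i : Fin d) :
    pairPt d x y ⟨i, left_lt i⟩ = x i := by
  simp [pairPt]

lemma pairPt_right (x y : Fin d → ℝ) (i : Fin d) :
    pairPt d x y ⟨d + i, right_lt i⟩ = y i := by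
  simp [pairPt]

lemma pair_forall (P : Fin (2 * d) → Prop) : (∀ i, P i) ↔
    (∀ i : Fin d, P ⟨i, left_lt i⟩) ∧
    ∀ i : Fin d, P ⟨d + i, right_lt i⟩ := by
  constructor
  · exact fun h => ⟨fun i => h _, fun i => h _⟩
  · rintro ⟨h1, h2⟩ i
    by_cases hi : (i : ℕ) < d
    · exact h1 ⟨i, hi⟩
    · have := h2 ⟨i - d, by have := i.isLt; omega⟩
      convert this using 1
      ext; simp; omega

lemma mem_cube_pair (K : CubeIdx d) (x y : Fin d → ℝ) :
    pairPt d x y ∈ cubeSet d K ↔ x ∈ cubeL K ∧ y ∈ cubeR K := by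
  unfold cubeSet cubeL cubeR
  rw [Set.mem_ofPred_eq, pair_forall]
  simp only [pairPt_left, pairPt_right, Set.mem_univ_pi]

lemma indC_prod (K : CubeIdx d) (x y : Fin d → ℝ) :
    indC d K (x, y) = (cubeL K).indicator 1 x * (cubeR K).indicator 1 y := by
  rw [indC_eq]
  simp only [Set.indicator_apply, mem_cube_pair, Pi.one_apply]
  split_ifs <;> simp_all

lemma measurableSet_dyadicI (j l : ℕ) : MeasurableSet (dyadicI j l) := by
  unfold dyadicI; split_ifs <;> measurability

lemma measurableSet_cubeL (K : CubeIdx d) : MeasurableSet (cubeL K) :=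
  MeasurableSet.univ_pi fun _ => measurableSet_dyadicI _ _

lemma measurableSet_cubeR (K : CubeIdx d) : MeasurableSet (cubeR K) :=
  MeasurableSet.univ_pi fun _ => measurableSet_dyadicI _ _

lemma volume_dyadicI (j l : ℕ) :
    volume (dyadicI j l) = ENNReal.ofReal (1 / 2 ^ j) := by
  have hp : (0 : ℝ) < 2 ^ j := by positivity
  unfold dyadicI
  split_ifs with h
  · rw [Real.volume_Icc]
    congr 1
    have : (l : ℝ) + 1 = 2 ^ j := by exact_mod_cast h
    field_simp; linarith
  · rw [Real.volume_Ico]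
    congr 1
    field_simp; ring

lemma volume_cubeR (K : CubeIdx d) :
    volume (cubeR K) = ENNReal.ofReal ((1 / 2 ^ K.1) ^ d) := by
  unfold cubeR
  rw [volume_pi_pi, Finset.prod_congr rfl fun i _ => volume_dyadicI _ _]
  rw [Finset.prod_const, Finset.card_univ, Fintype.card_fin, ENNReal.ofReal_pow (by positivity)]

lemma measurable_indC (K : CubeIdx d) : Measurable (indC d K) := by
  have : indC d K = fun p => (cubeL K).indicator 1 p.1 * (cubeR K).indicator 1 p.2 := by
    funext p; exact indC_prod K p.1 p.2
  rw [this]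
  exact ((measurable_one.indicator (measurableSet_cubeL K)).comp measurable_fst).mul
    ((measurable_one.indicator (measurableSet_cubeR K)).comp measurable_snd)

lemma integrable_indC (K : CubeIdx d) (x : Fin d → ℝ) :
    Integrable (fun y => indC d K (x, y)) := by
  simp only [indC_prod]
  refine Integrable.const_mul ?_ _
  refine (integrable_indicator_iff (measurableSet_cubeR K)).2 ?_
  refine integrableOn_const (by rw [volume_cubeR K]; exact ENNReal.ofReal_ne_top) (by simp)

lemma integral_indC (K : CubeIdx d) (x : Fin d → ℝ) :
    ∫ y, indC d K (x, y) = (cubeL K).indicator 1 x * (1 / 2 ^ K.1) ^ d := by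
  simp only [indC_prod]
  rw [integral_const_mul, integral_indicator_one (measurableSet_cubeR K), measureReal_def,
    volume_cubeR K, ENNReal.toReal_ofReal (by positivity)]

lemma mem_cube_root (x y : Fin d → ℝ) :
    pairPt d x y ∈ cubeSet d (rootC d) ↔ (x, y) ∈ unitSq d := by
  have h : cubeSet d (rootC d) = Set.Icc 0 1 := by
    ext z
    simp [cubeSet, rootC, dyadicI, Set.mem_Icc, Pi.le_def, forall_and]
  rw [h, unitSq, Set.mem_prod, Set.mem_Icc, Set.mem_Icc, Set.mem_Icc, Pi.le_def, Pi.le_def,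
    pair_forall, pair_forall]
  simp only [pairPt_left, pairPt_right, Pi.le_def, Pi.zero_apply, Pi.one_apply]
  tauto

lemma sIndA_eq (s : (Fin d → ℝ) → (Fin d → ℝ) → ℝ) (x y : Fin d → ℝ) :
    sIndA d s (x, y) = indC d (rootC d) (x, y) * s x y := by
  rw [indC_eq]
  simp only [sIndA, Set.indicator_apply, mem_cube_root]
  split_ifs <;> simp

end

noncomputable section
open Classical

variable {d : ℕ}

/-! ### The exponential supermartingale -/

/-- The compensated sum `∑_{i<n} ∫ g (x_i, y) dy` along a path `x`. -/
def compSum (n : ℕ) (x : ℕ → Fin d → ℝ) (g : (Fin d → ℝ) × (Fin d → ℝ) → ℝ) : ℝ :=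
  ∑ i ∈ Finset.range n, ∫ y, g (x i, y)

/-- The empirical sum `∑_{i<n} g (x_i, x_{i+1})` along a path `x`. -/
def empSum (n : ℕ) (x : ℕ → Fin d → ℝ) (g : (Fin d → ℝ) × (Fin d → ℝ) → ℝ) : ℝ :=
  ∑ i ∈ Finset.range n, g (x i, x (i + 1))

/-- The `σ`-algebra generated by `X_0, …, X_k`. -/
abbrev past {Ω : Type} (X : ℕ → Ω → (Fin d → ℝ)) (k : ℕ) : MeasurableSpace Ω :=
  ⨆ i ∈ Finset.range (k + 1), MeasurableSpace.comap (X i) inferInstance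

lemma past_le {Ω : Type} [hΩ : MeasurableSpace Ω] {X : ℕ → Ω → (Fin d → ℝ)}
    (hX : ∀ i, Measurable (X i)) (k : ℕ) : past X k ≤ hΩ :=
  iSup₂_le fun k _ => (hX k).comap_le

lemma measurable_past {Ω : Type} (X : ℕ → Ω → (Fin d → ℝ)) {i k : ℕ} (hik : i ≤ k) :
    Measurable[past X k] (X i) := by
  have : MeasurableSpace.comap (X i) inferInstance ≤ past X k :=
    le_iSup₂_of_le (f := fun k' (_ : k' ∈ Finset.range (k + 1)) =>
      MeasurableSpace.comap (X k') inferInstance) i (by simp; omega) le_rfl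
  exact measurable_iff_comap_le.2 this

/-- `X_0, …, X_n` is a homogeneous Markov chain with transition density `s`. -/
structure MarkovDensity {Ω : Type} [MeasurableSpace Ω] (P : Measure Ω) (n : ℕ)
    (X : ℕ → Ω → (Fin d → ℝ)) (s : (Fin d → ℝ) → (Fin d → ℝ) → ℝ) : Prop where
  meas : ∀ i, Measurable (X i)
  smeas : Measurable (Function.uncurry s)
  nonneg : ∀ x y, 0 ≤ s x y
  one : ∀ x, ∫ y, s x y = 1
  markov : ∀ i, i < n → ∀ g : (Fin d → ℝ) → ℝ, Measurable g → (∃ c, ∀ x, |g x| ≤ c) →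
          P[(fun ω => g (X (i + 1) ω)) |
              ⨆ k ∈ Finset.range (i + 1), MeasurableSpace.comap (X k) inferInstance]
            =ᵐ[P] fun ω => ∫ y, g y * s (X i ω) y

section chain
variable {Ω : Type} [MeasurableSpace Ω] {P : Measure Ω} [IsProbabilityMeasure P] {n : ℕ}
  {X : ℕ → Ω → (Fin d → ℝ)} {s : (Fin d → ℝ) → (Fin d → ℝ) → ℝ}

lemma integrable_s (hone : ∀ x, ∫ y, s x y = 1) (x : Fin d → ℝ) : Integrable (s x) := by
  by_contra h
  have := hone x
  rw [integral_undef h] at this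
  exact zero_ne_one this

lemma integrable_indC_s (hone : ∀ x, ∫ y, s x y = 1) (K : CubeIdx d) (x : Fin d → ℝ) :
    Integrable (fun y => indC d K (x, y) * s x y) := by
  refine (integrable_s hone x).bdd_mul (c := 1)
    ((measurable_indC K).comp measurable_prodMk_left).aestronglyMeasurable ?_
  refine Filter.Eventually.of_forall fun y => ?_
  rw [Real.norm_of_nonneg (indC_nonneg _ _)]
  exact indC_le_one _ _

/-- The conditional mass `∫ 1_K(x,y) s(x,y) dy` of the cube `K`. -/
def cubeMass (s : (Fin d → ℝ) → (Fin d → ℝ) → ℝ) (K : CubeIdx d) (x : Fin d → ℝ) : ℝ :=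
  ∫ y, indC d K (x, y) * s x y

lemma measurable_cubeMass (hs : Measurable (Function.uncurry s)) (K : CubeIdx d) :
    Measurable (cubeMass s K) := by
  have : Measurable fun p : (Fin d → ℝ) × (Fin d → ℝ) => indC d K p * Function.uncurry s p :=
    (measurable_indC K).mul hs
  exact (this.stronglyMeasurable.integral_prod_right (ν := volume)).measurable

lemma cubeMass_nonneg (hs : ∀ x y, 0 ≤ s x y) (K : CubeIdx d) (x : Fin d → ℝ) :
    0 ≤ cubeMass s K x :=
  integral_nonneg fun _ => mul_nonneg (indC_nonneg _ _) (hs _ _)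

lemma cubeMass_le_one (hs : ∀ x y, 0 ≤ s x y) (hone : ∀ x, ∫ y, s x y = 1)
    (K : CubeIdx d) (x : Fin d → ℝ) : cubeMass s K x ≤ 1 := by
  rw [← hone x]
  refine integral_mono (integrable_indC_s hone K x) (integrable_s hone x) fun y => ?_
  exact mul_le_of_le_one_left (hs _ _) (indC_le_one _ _)

/-- Conditional expectation of a cube indicator given the past, in integrated form. -/
lemma integral_indC_step (hX : MarkovDensity P n X s) {i : ℕ} (hi : i < n) {W : Ω → ℝ}
    (hW : Measurable[past X i] W)
    {B : ℝ} (hB : ∀ ω, |W ω| ≤ B) (K : CubeIdx d) :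
    ∫ ω, W ω * indC d K (X i ω, X (i + 1) ω) ∂P = ∫ ω, W ω * cubeMass s K (X i ω) ∂P := by
  have hFle := past_le hX.meas i
  have hXi : Measurable[past X i] (X i) := measurable_past X le_rfl
  let g : (Fin d → ℝ) → ℝ := (cubeR K).indicator 1
  have hg : Measurable g := measurable_one.indicator (measurableSet_cubeR K)
  have hgb : ∀ x, |g x| ≤ 1 := fun x => by
    simp only [g, Set.indicator_apply]; split_ifs <;> simp
  let V : Ω → ℝ := fun ω => W ω * (cubeL K).indicator 1 (X i ω)
  have hV : Measurable[past X i] V :=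
    hW.mul ((measurable_one.indicator (measurableSet_cubeL K)).comp hXi)
  have hVb : ∀ ω, |V ω| ≤ B := fun ω => by
    simp only [V, Set.indicator_apply]
    have := hB ω
    split_ifs
    · simpa using this
    · simpa using (abs_nonneg _).trans this
  have hgint : Integrable (fun ω => g (X (i + 1) ω)) P :=
    Integrable.of_bound (hg.comp (hX.meas _)).aestronglyMeasurable 1
      (Filter.Eventually.of_forall fun ω => hgb _)
  have hVg : Integrable (V * fun ω => g (X (i + 1) ω)) P :=
    hgint.bdd_mul (c := B) (hV.mono hFle le_rfl).aestronglyMeasurable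
      (Filter.Eventually.of_forall fun ω => hVb ω)
  have h1 := condExp_mul_of_stronglyMeasurable_left (m := past X i) (μ := P)
    hV.stronglyMeasurable hVg hgint
  have h2 : P[(fun ω => g (X (i + 1) ω)) | past X i] =ᵐ[P] fun ω => ∫ y, g y * s (X i ω) y :=
    hX.markov i hi g hg ⟨1, hgb⟩
  calc ∫ ω, W ω * indC d K (X i ω, X (i + 1) ω) ∂P
      = ∫ ω, (V * fun ω => g (X (i + 1) ω)) ω ∂P := by
        refine integral_congr_ae (Filter.Eventually.of_forall fun ω => ?_)
        simp only [indC_prod, V, g, Pi.mul_apply]; ring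
    _ = ∫ ω, (P[V * fun ω => g (X (i + 1) ω)|past X i]) ω ∂P := (integral_condExp hFle).symm
    _ = ∫ ω, W ω * cubeMass s K (X i ω) ∂P := by
        refine integral_congr_ae ?_
        filter_upwards [h1, h2] with ω e1 e2
        rw [e1, Pi.mul_apply, e2]
        simp only [cubeMass, indC_prod, V, g, mul_assoc]
        rw [integral_const_mul]

variable (s) in
/-- The log of the exponential process attached to weights `φ` on the cubes of `m`. -/
def logProc (m : Finset (CubeIdx d)) (φ : CubeIdx d → ℝ) (k : ℕ) (x : ℕ → Fin d → ℝ) : ℝ :=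
  ∑ i ∈ Finset.range k, ∑ Q ∈ m,
    (φ Q * indC d Q (x i, x (i + 1)) - (exp (φ Q) - 1) * cubeMass s Q (x i))

omit [MeasurableSpace Ω] in
lemma measurable_logProc (hs : Measurable (Function.uncurry s)) {F : MeasurableSpace Ω}
    (m : Finset (CubeIdx d)) (φ : CubeIdx d → ℝ) (k : ℕ)
    (hXm : ∀ i ≤ k, Measurable[F] (X i)) :
    Measurable[F] (fun ω => logProc s m φ k (fun i => X i ω)) := by
  unfold logProc
  refine Finset.measurable_fun_sum _ fun i hi => Finset.measurable_fun_sum _ fun Q _ => ?_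
  rw [Finset.mem_range] at hi
  refine Measurable.sub ?_ ?_
  · exact (((measurable_indC Q).comp
      ((hXm i (by omega)).prodMk (hXm (i + 1) (by omega)))).const_mul _)
  · exact (((measurable_cubeMass hs Q).comp (hXm i (by omega))).const_mul _)

lemma logProc_le (hs : ∀ x y, 0 ≤ s x y) (hone : ∀ x, ∫ y, s x y = 1)
    (m : Finset (CubeIdx d)) (φ : CubeIdx d → ℝ) (k : ℕ) :
    ∃ B, ∀ x : ℕ → Fin d → ℝ, logProc s m φ k x ≤ B := by
  refine ⟨∑ i ∈ Finset.range k, ∑ Q ∈ m, (|φ Q| + |exp (φ Q) - 1|), fun x => ?_⟩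
  refine Finset.sum_le_sum fun i _ => Finset.sum_le_sum fun Q _ => ?_
  have h1 : φ Q * indC d Q (x i, x (i + 1)) ≤ |φ Q| := by
    refine (le_abs_self _).trans ?_
    rw [abs_mul, abs_of_nonneg (indC_nonneg _ _)]
    exact mul_le_of_le_one_right (abs_nonneg _) (indC_le_one _ _)
  have h2 : -((exp (φ Q) - 1) * cubeMass s Q (x i)) ≤ |exp (φ Q) - 1| := by
    refine (neg_le_abs _).trans ?_
    rw [abs_mul, abs_of_nonneg (cubeMass_nonneg hs _ _)]
    exact mul_le_of_le_one_right (abs_nonneg _) (cubeMass_le_one hs hone _ _)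
  linarith

/-- As the cubes of `m` are disjoint, `exp (∑ φ_Q 1_Q) = 1 + ∑ (exp φ_Q - 1) 1_Q`. -/
lemma exp_sum_indC {ℓ : ℕ} {m : Finset (CubeIdx d)} (hm : IsPartOf d ℓ (rootC d) m)
    (φ : CubeIdx d → ℝ) (p : (Fin d → ℝ) × (Fin d → ℝ)) :
    exp (∑ Q ∈ m, φ Q * indC d Q p) = 1 + ∑ Q ∈ m, (exp (φ Q) - 1) * indC d Q p := by
  by_cases h : ∃ Q ∈ m, indC d Q p ≠ 0
  · obtain ⟨Q, hQ, hp⟩ := h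
    rw [part_sum_mul hm valid_root p hQ hp, part_sum_mul hm valid_root p hQ hp
      (fun Q => exp (φ Q) - 1)]
    ring
  · push Not at h
    rw [Finset.sum_eq_zero fun Q hQ => by rw [h Q hQ, mul_zero],
      Finset.sum_eq_zero fun Q hQ => by rw [h Q hQ, mul_zero]]
    simp

/-- The exponential process is a supermartingale started from `1`. -/
lemma exp_logProc_le (hX : MarkovDensity P n X s) {ℓ : ℕ} {m : Finset (CubeIdx d)}
    (hm : IsPartOf d ℓ (rootC d) m) (φ : CubeIdx d → ℝ) (k : ℕ) (hk : k ≤ n) :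
    Integrable (fun ω => exp (logProc s m φ k fun i => X i ω)) P ∧
      ∫ ω, exp (logProc s m φ k fun i => X i ω) ∂P ≤ 1 := by
  have hint : ∀ k, Integrable (fun ω => exp (logProc s m φ k fun i => X i ω)) P := by
    intro k
    obtain ⟨B, hB⟩ := logProc_le hX.nonneg hX.one m φ k
    refine Integrable.of_bound
      (measurable_exp.comp (measurable_logProc hX.smeas m φ k
        fun i _ => hX.meas i)).aestronglyMeasurable (exp B)
      (Filter.Eventually.of_forall fun ω => ?_)
    rw [Real.norm_of_nonneg (exp_pos _).le]
    exact exp_le_exp.2 (hB _)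
  refine ⟨hint k, ?_⟩
  induction k with
  | zero => simp [logProc]
  | succ k ih =>
    refine le_trans ?_ (ih (by omega))
    have hXm : ∀ i ≤ k, Measurable[past X k] (X i) := fun i hi => measurable_past X hi
    let R : Ω → ℝ := fun ω => ∑ Q ∈ m, (exp (φ Q) - 1) * cubeMass s Q (X k ω)
    have hR : Measurable[past X k] R := Finset.measurable_fun_sum _ fun Q _ =>
      ((measurable_cubeMass hX.smeas Q).comp (hXm k le_rfl)).const_mul _
    have hRb : ∀ ω, |R ω| ≤ ∑ Q ∈ m, |exp (φ Q) - 1| := fun ω => by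
      refine (Finset.abs_sum_le_sum_abs _ _).trans (Finset.sum_le_sum fun Q _ => ?_)
      rw [abs_mul, abs_of_nonneg (cubeMass_nonneg hX.nonneg _ _)]
      exact mul_le_of_le_one_right (abs_nonneg _) (cubeMass_le_one hX.nonneg hX.one _ _)
    let W : Ω → ℝ := fun ω => exp (logProc s m φ k fun i => X i ω) * exp (-R ω)
    have hW : Measurable[past X k] W :=
      (measurable_exp.comp (measurable_logProc hX.smeas m φ k hXm)).mul
        (measurable_exp.comp hR.neg)
    obtain ⟨B, hB⟩ := logProc_le hX.nonneg hX.one m φ k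
    have hWb : ∀ ω, |W ω| ≤ exp B * exp (∑ Q ∈ m, |exp (φ Q) - 1|) := fun ω => by
      rw [abs_of_nonneg (by positivity)]
      have := neg_le_abs (R ω)
      exact mul_le_mul (exp_le_exp.2 (hB _)) (exp_le_exp.2 (this.trans (hRb ω)))
        (exp_pos _).le (exp_pos _).le
    have hFle := past_le hX.meas k
    have hWm : AEStronglyMeasurable W P := (hW.mono hFle le_rfl).aestronglyMeasurable
    have hWint : Integrable W P := Integrable.of_bound hWm _ (Filter.Eventually.of_forall hWb)
    have hi1 : ∀ Q, Integrable (fun ω => W ω * indC d Q (X k ω, X (k + 1) ω)) P := fun Q => by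
      refine hWint.mul_bdd (c := 1) ((measurable_indC Q).comp
        ((hX.meas _).prodMk (hX.meas _))).aestronglyMeasurable
        (Filter.Eventually.of_forall fun ω => ?_)
      rw [Real.norm_of_nonneg (indC_nonneg _ _)]
      exact indC_le_one _ _
    have hi2 : ∀ Q, Integrable (fun ω => W ω * cubeMass s Q (X k ω)) P := fun Q => by
      refine hWint.mul_bdd (c := 1) ((measurable_cubeMass hX.smeas Q).comp
        (hX.meas _)).aestronglyMeasurable (Filter.Eventually.of_forall fun ω => ?_)
      rw [Real.norm_of_nonneg (cubeMass_nonneg hX.nonneg _ _)]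
      exact cubeMass_le_one hX.nonneg hX.one _ _
    have e1 : ∀ ω, exp (logProc s m φ (k + 1) fun i => X i ω)
        = W ω + ∑ Q ∈ m, (exp (φ Q) - 1) * (W ω * indC d Q (X k ω, X (k + 1) ω)) := by
      intro ω
      have : logProc s m φ (k + 1) (fun i => X i ω) = logProc s m φ k (fun i => X i ω) + -R ω
          + ∑ Q ∈ m, φ Q * indC d Q (X k ω, X (k + 1) ω) := by
        unfold logProc
        rw [Finset.sum_range_succ, Finset.sum_sub_distrib]
        simp only [R]; ring
      rw [this, exp_add, exp_add, exp_sum_indC hm]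
      simp only [W, mul_add, Finset.mul_sum]
      rw [mul_one]
      congr 1
      exact Finset.sum_congr rfl fun Q _ => by ring
    have e2 : ∀ ω, W ω + ∑ Q ∈ m, (exp (φ Q) - 1) * (W ω * cubeMass s Q (X k ω))
        ≤ exp (logProc s m φ k fun i => X i ω) := by
      intro ω
      have h1 : W ω + ∑ Q ∈ m, (exp (φ Q) - 1) * (W ω * cubeMass s Q (X k ω))
          = W ω * (R ω + 1) := by
        simp only [R]
        rw [mul_add, mul_one, Finset.mul_sum, add_comm]
        congr 1
        exact Finset.sum_congr rfl fun Q _ => by ring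
      rw [h1]
      calc W ω * (R ω + 1) ≤ W ω * exp (R ω) :=
            mul_le_mul_of_nonneg_left (add_one_le_exp _) (by positivity)
        _ = _ := by simp only [W]; rw [mul_assoc, ← exp_add]; simp
    calc ∫ ω, exp (logProc s m φ (k + 1) fun i => X i ω) ∂P
        = ∫ ω, W ω ∂P + ∑ Q ∈ m, (exp (φ Q) - 1)
            * ∫ ω, W ω * indC d Q (X k ω, X (k + 1) ω) ∂P := by
          rw [integral_congr_ae (Filter.Eventually.of_forall e1), integral_add hWint
            (integrable_finsetSum _ fun Q _ => (hi1 Q).const_mul _),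
            integral_finsetSum _ fun Q _ => (hi1 Q).const_mul _]
          simp only [integral_const_mul]
      _ = ∫ ω, W ω ∂P + ∑ Q ∈ m, (exp (φ Q) - 1)
            * ∫ ω, W ω * cubeMass s Q (X k ω) ∂P := by
          congr 1
          exact Finset.sum_congr rfl fun Q _ => by
            rw [integral_indC_step hX (by omega) hW hWb]
      _ = ∫ ω, W ω + ∑ Q ∈ m, (exp (φ Q) - 1) * (W ω * cubeMass s Q (X k ω)) ∂P := by
          rw [integral_add hWint
            (integrable_finsetSum _ fun Q _ => (hi2 Q).const_mul _),
            integral_finsetSum _ fun Q _ => (hi2 Q).const_mul _]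
          simp only [integral_const_mul]
      _ ≤ _ := integral_mono (hWint.add
            (integrable_finsetSum _ fun Q _ => (hi2 Q).const_mul _)) (hint k) e2

lemma logProc_eq (m : Finset (CubeIdx d)) (φ : CubeIdx d → ℝ) (k : ℕ) (x : ℕ → Fin d → ℝ) :
    logProc s m φ k x = ∑ Q ∈ m, (φ Q * empSum k x (indC d Q)
      - (exp (φ Q) - 1) * compSum k x fun p => indC d Q p * s p.1 p.2) := by
  unfold logProc empSum compSum
  rw [Finset.sum_comm]
  refine Finset.sum_congr rfl fun Q _ => ?_
  rw [Finset.sum_sub_distrib, Finset.mul_sum, Finset.mul_sum]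
  rfl

/-- Exponential deviation inequality for the counts of the cubes of a partition. -/
lemma deviation (hX : MarkovDensity P n X s) {ℓ : ℕ} {m : Finset (CubeIdx d)}
    (hm : IsPartOf d ℓ (rootC d) m) (φ : CubeIdx d → ℝ) (ξ : ℝ) :
    P.real {ω | ξ ≤ ∑ Q ∈ m, (φ Q * empSum n (fun i => X i ω) (indC d Q)
      - (exp (φ Q) - 1) * compSum n (fun i => X i ω) fun p => indC d Q p * s p.1 p.2)}
      ≤ exp (-ξ) := by
  obtain ⟨hi, hle⟩ := exp_logProc_le hX hm φ n le_rfl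
  have := mul_meas_ge_le_integral_of_nonneg
    (Filter.Eventually.of_forall fun ω => (exp_pos _).le) hi (exp ξ)
  simp only [exp_le_exp, logProc_eq] at this hle
  rw [exp_neg, ← one_div, le_div_iff₀ (exp_pos _), mul_comm]
  exact this.trans hle

end chain
end

noncomputable section
open Classical

variable {d : ℕ}

/-! ### Histograms along a fixed path -/

lemma part_cases {ℓ : ℕ} {m : Finset (CubeIdx d)} (h : IsPartOf d ℓ (rootC d) m)
    (p : (Fin d → ℝ) × (Fin d → ℝ)) :
    (∃ K ∈ m, indC d K p = 1 ∧ indC d (rootC d) p = 1 ∧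
        ∀ F : CubeIdx d → ℝ, ∑ Q ∈ m, F Q * indC d Q p = F K) ∨
      (indC d (rootC d) p = 0 ∧ (∀ Q ∈ m, indC d Q p = 0) ∧
        ∀ F : CubeIdx d → ℝ, ∑ Q ∈ m, F Q * indC d Q p = 0) := by
  by_cases hz : ∃ K ∈ m, indC d K p ≠ 0
  · obtain ⟨K, hK, hne⟩ := hz
    have h1 : indC d K p = 1 := by
      rw [indC_eq] at hne ⊢
      split_ifs at hne ⊢ <;> simp_all
    have h2 := part_sum_mul h valid_root p hK hne
    refine Or.inl ⟨K, hK, h1, ?_, h2⟩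
    rw [← part_sum h valid_root p]
    simpa using h2 fun _ => 1
  · push Not at hz
    refine Or.inr ⟨?_, hz, fun F => Finset.sum_eq_zero fun Q hQ => by rw [hz Q hQ, mul_zero]⟩
    rw [← part_sum h valid_root p]
    exact Finset.sum_eq_zero hz

lemma indC_cases (K : CubeIdx d) (p : (Fin d → ℝ) × (Fin d → ℝ)) :
    indC d K p = 0 ∨ indC d K p = 1 := by
  rw [indC_eq]; split_ifs <;> simp

/-- `(√(s 1_A) - √g)²` for a histogram `g`, cube by cube. -/
lemma sq_s_hist {ℓ : ℕ} {m : Finset (CubeIdx d)} (h : IsPartOf d ℓ (rootC d) m)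
    (s : (Fin d → ℝ) → (Fin d → ℝ) → ℝ) (a : CubeIdx d → ℝ) (p : (Fin d → ℝ) × (Fin d → ℝ)) :
    (√(sIndA d s p) - √(∑ K ∈ m, a K * indC d K p)) ^ 2
      = ∑ K ∈ m, indC d K p * (√(s p.1 p.2) - √(a K)) ^ 2 := by
  have e : sIndA d s p = indC d (rootC d) p * s p.1 p.2 := sIndA_eq s p.1 p.2
  rw [e]
  rcases part_cases h p with ⟨K, hK, h1, h2, h3⟩ | ⟨h1, h2, h3⟩
  · simp only [mul_comm (indC d _ p)]
    rw [h3 a, h3, h2, mul_one]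
  · simp only [mul_comm (indC d _ p)]
    rw [h3 a, h3, h1]; simp

/-- `(√g - √g')²` for two histograms, on the pieces of the common refinement. -/
lemma sq_hist_hist {ℓ ℓ' : ℕ} {m m' : Finset (CubeIdx d)} (h : IsPartOf d ℓ (rootC d) m)
    (h' : IsPartOf d ℓ' (rootC d) m') (a a' : CubeIdx d → ℝ) (p : (Fin d → ℝ) × (Fin d → ℝ)) :
    (√(∑ K ∈ m, a K * indC d K p) - √(∑ K ∈ m', a' K * indC d K p)) ^ 2
      = ∑ K ∈ m, ∑ K' ∈ m', (√(a K) - √(a' K')) ^ 2 * (indC d K p * indC d K' p) := by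
  have e : ∀ K, ∑ K' ∈ m', (√(a K) - √(a' K')) ^ 2 * (indC d K p * indC d K' p)
      = (∑ K' ∈ m', (√(a K) - √(a' K')) ^ 2 * indC d K' p) * indC d K p := fun K => by
    rw [Finset.sum_mul]; exact Finset.sum_congr rfl fun _ _ => by ring
  simp only [e]
  rcases part_cases h p with ⟨K, hK, h1, h2, h3⟩ | ⟨h1, h2, h3⟩
  · rcases part_cases h' p with ⟨K', hK', h1', h2', h3'⟩ | ⟨h1', h2', h3'⟩
    · rw [h3 a, h3' a', h3, h3']
    · rw [h2] at h1'; norm_num at h1'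
  · rcases part_cases h' p with ⟨K', hK', h1', h2', h3'⟩ | ⟨h1', h2', h3'⟩
    · rw [h1] at h2'; norm_num at h2'
    · rw [h3 a, h3' a', h3]; simp

/-- Integrability on each fibre `{x} × ℝ^d`. -/
def FInt (g : (Fin d → ℝ) × (Fin d → ℝ) → ℝ) : Prop := ∀ u, Integrable fun y => g (u, y)

lemma FInt.sum {ι : Type} {t : Finset ι} {g : ι → (Fin d → ℝ) × (Fin d → ℝ) → ℝ}
    (hg : ∀ i ∈ t, FInt (g i)) : FInt fun p => ∑ i ∈ t, g i p :=
  fun u => integrable_finsetSum _ fun i hi => hg i hi u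

lemma FInt.const_mul {g : (Fin d → ℝ) × (Fin d → ℝ) → ℝ} (hg : FInt g) (c : ℝ) :
    FInt fun p => c * g p := fun u => (hg u).const_mul c

lemma FInt.add {g g' : (Fin d → ℝ) × (Fin d → ℝ) → ℝ} (hg : FInt g) (hg' : FInt g') :
    FInt fun p => g p + g' p := fun u => (hg u).add (hg' u)

lemma fint_indC (K : CubeIdx d) : FInt (indC d K) := integrable_indC K

lemma fint_indC2 (K K' : CubeIdx d) : FInt fun p => indC d K p * indC d K' p := fun u => by
  refine (integrable_indC K' u).bdd_mul (c := 1)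
    ((measurable_indC K).comp measurable_prodMk_left).aestronglyMeasurable
    (Filter.Eventually.of_forall fun y => ?_)
  rw [Real.norm_of_nonneg (indC_nonneg _ _)]
  exact indC_le_one _ _

variable {n : ℕ} {x : ℕ → Fin d → ℝ}

lemma compSum_const_mul (c : ℝ) (g : (Fin d → ℝ) × (Fin d → ℝ) → ℝ) :
    compSum n x (fun p => c * g p) = c * compSum n x g := by
  simp only [compSum, integral_const_mul, Finset.mul_sum]

lemma compSum_sum {ι : Type} {t : Finset ι} {g : ι → (Fin d → ℝ) × (Fin d → ℝ) → ℝ}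
    (hg : ∀ i ∈ t, FInt (g i)) :
    compSum n x (fun p => ∑ i ∈ t, g i p) = ∑ i ∈ t, compSum n x (g i) := by
  unfold compSum
  rw [Finset.sum_comm]
  exact Finset.sum_congr rfl fun i _ => integral_finsetSum _ fun j hj => hg j hj _

lemma compSum_add {g g' : (Fin d → ℝ) × (Fin d → ℝ) → ℝ} (hg : FInt g) (hg' : FInt g') :
    compSum n x (fun p => g p + g' p) = compSum n x g + compSum n x g' := by
  unfold compSum
  rw [← Finset.sum_add_distrib]
  exact Finset.sum_congr rfl fun i _ => integral_add (hg _) (hg' _)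

lemma compSum_mono {g g' : (Fin d → ℝ) × (Fin d → ℝ) → ℝ} (hg : FInt g) (hg' : FInt g')
    (h : ∀ p, g p ≤ g' p) : compSum n x g ≤ compSum n x g' :=
  Finset.sum_le_sum fun _ _ => integral_mono (hg _) (hg' _) fun _ => h _

lemma compSum_nonneg {g : (Fin d → ℝ) × (Fin d → ℝ) → ℝ} (h : ∀ p, 0 ≤ g p) :
    0 ≤ compSum n x g := Finset.sum_nonneg fun _ _ => integral_nonneg fun _ => h _

lemma compSum_zero : compSum n x (0 : (Fin d → ℝ) × (Fin d → ℝ) → ℝ) = 0 := by simp [compSum]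

lemma empSum_zero : empSum n x (0 : (Fin d → ℝ) × (Fin d → ℝ) → ℝ) = 0 := by simp [empSum]

lemma empSum_nonneg {g : (Fin d → ℝ) × (Fin d → ℝ) → ℝ} (h : ∀ p, 0 ≤ g p) :
    0 ≤ empSum n x g := Finset.sum_nonneg fun _ _ => h _

lemma empSum_mono {g g' : (Fin d → ℝ) × (Fin d → ℝ) → ℝ}
    (h : ∀ p, g p ≤ g' p) : empSum n x g ≤ empSum n x g' :=
  Finset.sum_le_sum fun _ _ => h _

lemma empSum_sum {ι : Type} {t : Finset ι} (g : ι → (Fin d → ℝ) × (Fin d → ℝ) → ℝ) :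
    empSum n x (fun p => ∑ i ∈ t, g i p) = ∑ i ∈ t, empSum n x (g i) := by
  unfold empSum
  rw [Finset.sum_comm]

lemma empSum_indC_le (K : CubeIdx d) : empSum n x (indC d K) ≤ n := by
  calc empSum n x (indC d K) ≤ empSum n x (fun _ => 1) := empSum_mono fun p => indC_le_one K p
    _ = n := by simp [empSum]

lemma compSum_root_le : compSum n x (indC d (rootC d)) ≤ n := by
  calc compSum n x (indC d (rootC d)) ≤ ∑ i ∈ Finset.range n, 1 := by
        refine Finset.sum_le_sum fun i _ => ?_
        rw [integral_indC]
        simp only [rootC, pow_zero, div_one, one_pow, mul_one, Set.indicator_apply]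
        split_ifs <;> simp
    _ = n := by simp

variable (n x) in
/-- The value of the histogram estimator on the cube `K`. -/
def coef (K : CubeIdx d) : ℝ := empSum n x (indC d K) / compSum n x (indC d K)

lemma coef_nonneg (K : CubeIdx d) : 0 ≤ coef n x K :=
  div_nonneg (empSum_nonneg (indC_nonneg K)) (compSum_nonneg (indC_nonneg K))

/-- If no `x_i` visits the left side of `K` then neither sum charges `K`. -/
lemma empSum_eq_zero {K : CubeIdx d} (h : compSum n x (indC d K) = 0) :
    empSum n x (indC d K) = 0 := by
  unfold compSum at h
  rw [Finset.sum_eq_zero_iff_of_nonneg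
    fun i _ => integral_nonneg fun y => indC_nonneg K _] at h
  refine Finset.sum_eq_zero fun i hi => ?_
  have := h i hi
  rw [integral_indC] at this
  have h0 : (cubeL K).indicator (1 : (Fin d → ℝ) → ℝ) (x i) = 0 := by
    rcases mul_eq_zero.1 this with h | h
    · exact h
    · exact absurd h (by positivity)
  rw [indC_prod, h0, zero_mul]

lemma coef_mul (K : CubeIdx d) : coef n x K * compSum n x (indC d K) = empSum n x (indC d K) := by
  unfold coef
  by_cases h : compSum n x (indC d K) = 0
  · rw [h, mul_zero, empSum_eq_zero h]
  · exact div_mul_cancel₀ _ h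

lemma histEst_eq {Ω : Type} (X : ℕ → Ω → (Fin d → ℝ)) (m : Finset (CubeIdx d)) (ω : Ω)
    (p : (Fin d → ℝ) × (Fin d → ℝ)) :
    histEst d n X m ω p = ∑ K ∈ m, coef n (fun i => X i ω) K * indC d K p := rfl

/-! ### The local test statistic -/

/-- The coefficient `(√c - √b)/√(b+c)` of the empirical part of the test. -/
def psi (b c : ℝ) : ℝ := (√c - √b) / √(b + c)

/-- The coefficient of the compensated part of `α H² + T` for the constants `b`, `c`. -/
def tb (b c : ℝ) : ℝ :=
  alphaC / 2 * (√b - √c) ^ 2 + 1 / (2 * √2) * (√(b + c) * (√c - √b)) + (b - c) / 2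

variable (n x) in
/-- `α H²(b e, c e) + T(b e, c e)` for constants `b`, `c` and an indicator `e`. -/
def Gfun (b c : ℝ) (e : (Fin d → ℝ) × (Fin d → ℝ) → ℝ) : ℝ :=
  1 / n * (tb b c * compSum n x e + 1 / √2 * psi b c * empSum n x e)

lemma Gfun_zero (b c : ℝ) : Gfun n x b c 0 = 0 := by
  simp [Gfun, compSum_zero, empSum_zero]

lemma Gfun_spec {Ω : Type} (X : ℕ → Ω → (Fin d → ℝ)) (ω : Ω) (b c : ℝ)
    {e : (Fin d → ℝ) × (Fin d → ℝ) → ℝ} (he : ∀ p, e p = 0 ∨ e p = 1)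
    {f g : (Fin d → ℝ) × (Fin d → ℝ) → ℝ} (hf : ∀ p, f p = b * e p) (hg : ∀ p, g p = c * e p) :
    alphaC * hellSq d n X ω f g + Tstat d n X ω f g = Gfun n (fun i => X i ω) b c e := by
  have e1 : ∀ p, (√(f p) - √(g p)) ^ 2 = (√b - √c) ^ 2 * e p := fun p => by
    rw [hf, hg]; rcases he p with h | h <;> simp [h]
  have e2 : ∀ p, √(f p + g p) * (√(g p) - √(f p)) = (√(b + c) * (√c - √b)) * e p := fun p => by
    rw [hf, hg]; rcases he p with h | h <;> simp [h]
  have e3 : ∀ p, (√(g p) - √(f p)) / √(f p + g p) = psi b c * e p := fun p => by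
    rw [hf, hg]; rcases he p with h | h <;> simp [h, psi]
  have e4 : ∀ p, f p - g p = (b - c) * e p := fun p => by rw [hf, hg]; ring
  unfold hellSq Tstat
  simp only [e1, e2, e3, e4, integral_const_mul, ← Finset.mul_sum]
  unfold Gfun tb compSum empSum
  have : (√2 : ℝ) ≠ 0 := by positivity
  by_cases hn : (n : ℝ) = 0
  · simp [hn]
  · field_simp
    ring

lemma alphaC_pos : 0 < alphaC := by
  unfold alphaC
  have : (1 : ℝ) / √2 < 1 := by
    rw [div_lt_one (by positivity)]
    exact Real.lt_sqrt_of_sq_lt (by norm_num)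
  linarith

lemma inv_sqrt_two : (1 : ℝ) / √2 ≤ 0.708 ∧ 0.7 ≤ (1 : ℝ) / √2 := by
  have h0 : (0 : ℝ) < √2 := by positivity
  constructor
  · rw [div_le_iff₀ h0]
    nlinarith [Real.le_sqrt' (x := 1.414) (y := 2) (by norm_num) |>.2 (by norm_num)]
  · rw [le_div_iff₀ h0]
    nlinarith [Real.sqrt_le_iff (x := 2) (y := 1.415) |>.2 ⟨by norm_num, by norm_num⟩]

lemma sqrt_sub_le {b c : ℝ} (hb : 0 ≤ b) (hc : 0 ≤ c) : |√c - √b| ≤ √(b + c) := by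
  refine Real.abs_le_sqrt ?_
  nlinarith [Real.sq_sqrt hb, Real.sq_sqrt hc, mul_nonneg (Real.sqrt_nonneg b) (Real.sqrt_nonneg c)]

lemma abs_psi_le {b c : ℝ} (hb : 0 ≤ b) (hc : 0 ≤ c) : |psi b c| ≤ 1 := by
  unfold psi
  rw [abs_div, abs_of_nonneg (Real.sqrt_nonneg (b + c))]
  exact div_le_one_of_le₀ (sqrt_sub_le hb hc) (Real.sqrt_nonneg _)

lemma abs_tb_le {b c : ℝ} (hb : 0 ≤ b) (hc : 0 ≤ c) : |tb b c| ≤ b + c := by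
  have h1 := sqrt_sub_le hb hc
  have hs := Real.sq_sqrt (add_nonneg hb hc)
  have h2 : (√b - √c) ^ 2 ≤ b + c := by
    nlinarith [Real.sq_sqrt hb, Real.sq_sqrt hc,
      mul_nonneg (Real.sqrt_nonneg b) (Real.sqrt_nonneg c)]
  have h3 : |√(b + c) * (√c - √b)| ≤ b + c := by
    rw [abs_mul, abs_of_nonneg (Real.sqrt_nonneg _)]
    nlinarith [Real.sqrt_nonneg (b + c)]
  obtain ⟨hi1, hi2⟩ := inv_sqrt_two
  have ha : alphaC ≤ 0.15 := by unfold alphaC; linarith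
  have ha0 := alphaC_pos
  have hk : 1 / (2 * √2) = (1 / √2) / 2 := by rw [div_div, mul_comm]
  unfold tb
  rw [hk]
  obtain ⟨h4, h5⟩ := abs_le.1 h3
  have hsq := sq_nonneg (√b - √c)
  rw [abs_le]
  constructor <;> nlinarith

lemma tb_symm (b c : ℝ) : tb b c + tb c b = alphaC * (√b - √c) ^ 2 := by
  unfold tb; rw [add_comm c b]; ring

lemma psi_symm (b c : ℝ) : psi c b = - psi b c := by
  unfold psi; rw [add_comm c b]; ring

lemma abs_Gfun_le {b c : ℝ} (hb : 0 ≤ b) (hc : 0 ≤ c)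
    {e : (Fin d → ℝ) × (Fin d → ℝ) → ℝ} (he : ∀ p, 0 ≤ e p) :
    |Gfun n x b c e| ≤ 1 / n * (b * compSum n x e + c * compSum n x e + empSum n x e) := by
  unfold Gfun
  have hD : 0 ≤ compSum n x e := compSum_nonneg he
  have hN : 0 ≤ empSum n x e := empSum_nonneg he
  rw [abs_mul, abs_of_nonneg (by positivity : (0 : ℝ) ≤ 1 / n)]
  refine mul_le_mul_of_nonneg_left ?_ (by positivity)
  refine (abs_add_le _ _).trans ?_
  rw [abs_mul, abs_mul, abs_mul, abs_of_nonneg hD, abs_of_nonneg hN,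
    abs_of_nonneg (by positivity : (0 : ℝ) ≤ 1 / √2)]
  have h1 := mul_le_mul_of_nonneg_right (abs_tb_le hb hc) hD
  have h2 : 1 / √2 * |psi b c| ≤ 1 := by
    nlinarith [inv_sqrt_two.1, abs_psi_le hb hc, abs_nonneg (psi b c), inv_sqrt_two.2]
  have h3 := mul_le_mul_of_nonneg_right h2 hN
  linarith

variable (n x) in
/-- The local comparison of the estimators of `m` and `m'` on the cube `K`. -/
def Tloc (m' : Finset (CubeIdx d)) (K : CubeIdx d) : ℝ :=
  ∑ K' ∈ m', Gfun n x (coef n x K) (coef n x K') fun p => indC d K p * indC d K' p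

lemma abs_Tloc_le (hn : 0 < n) {ℓ : ℕ} {m' : Finset (CubeIdx d)}
    (h' : IsPartOf d ℓ (rootC d) m') {K : CubeIdx d} (hK : validC K) (hKr : anc (rootC d) K) :
    |Tloc n x m' K| ≤ 3 := by
  have hn' : (0 : ℝ) < n := by exact_mod_cast hn
  have hD2 : ∑ K' ∈ m', compSum n x (fun p => indC d K p * indC d K' p)
      = compSum n x (indC d K) := by
    rw [← compSum_sum fun i _ => fint_indC2 K i]
    congr 1; funext p
    rw [← Finset.mul_sum, part_sum h' valid_root, mul_comm]
    exact indC_mul_anc valid_root hK hKr p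
  have hN2 : ∑ K' ∈ m', empSum n x (fun p => indC d K p * indC d K' p)
      = empSum n x (indC d K) := by
    rw [← empSum_sum]
    congr 1; funext p
    rw [← Finset.mul_sum, part_sum h' valid_root, mul_comm]
    exact indC_mul_anc valid_root hK hKr p
  have hc : ∑ K' ∈ m', coef n x K' * compSum n x (fun p => indC d K p * indC d K' p) ≤ n := by
    calc _ ≤ ∑ K' ∈ m', empSum n x (indC d K') := by
          refine Finset.sum_le_sum fun K' _ => ?_
          rw [← coef_mul]
          refine mul_le_mul_of_nonneg_left ?_ (coef_nonneg _)
          exact compSum_mono (fint_indC2 _ _) (fint_indC _) fun p =>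
            mul_le_of_le_one_left (indC_nonneg _ _) (indC_le_one _ _)
      _ = empSum n x (indC d (rootC d)) := by
          rw [← empSum_sum]
          congr 1; funext p; exact part_sum h' valid_root p
      _ ≤ n := empSum_indC_le _
  calc |Tloc n x m' K| ≤ ∑ K' ∈ m', 1 / n * (coef n x K *
          compSum n x (fun p => indC d K p * indC d K' p) + coef n x K' *
          compSum n x (fun p => indC d K p * indC d K' p)
          + empSum n x (fun p => indC d K p * indC d K' p)) :=
        (Finset.abs_sum_le_sum_abs _ _).trans <| Finset.sum_le_sum fun K' _ =>
          abs_Gfun_le (coef_nonneg _) (coef_nonneg _)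
            fun p => mul_nonneg (indC_nonneg _ _) (indC_nonneg _ _)
    _ ≤ 1 / n * (n + n + n) := by
        rw [← Finset.mul_sum, Finset.sum_add_distrib, Finset.sum_add_distrib, ← Finset.mul_sum,
          hD2, hN2, coef_mul]
        have := empSum_indC_le (n := n) (x := x) K
        gcongr
    _ = 3 := by field_simp; ring

end

noncomputable section
open Classical

variable {d : ℕ} {n : ℕ} {x : ℕ → Fin d → ℝ}

/-! ### The selection criterion -/

lemma mem_MpartE_top {m : Finset (CubeIdx d)} :
    m ∈ MpartE d ⊤ ↔ ∃ ℓ, IsPartOf d ℓ (rootC d) m := by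
  simp [MpartE, MpartInf, Mpart]

lemma penC_nonneg {L : ℝ} (hL : 0 ≤ L) (n c : ℕ) : 0 ≤ penC L n c := by
  unfold penC
  have : 0 ≤ Real.log n := Real.log_natCast_nonneg n
  positivity

lemma penC_mono {L : ℝ} (hL : 0 ≤ L) (n : ℕ) {c c' : ℕ} (h : c ≤ c') :
    penC L n c ≤ penC L n c' := by
  unfold penC
  have : 0 ≤ Real.log n := Real.log_natCast_nonneg n
  gcongr

lemma penC_add (L : ℝ) (n c c' : ℕ) : penC L n (c + c') = penC L n c + penC L n c' := by
  unfold penC; push_cast; ring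

lemma penC_sum (L : ℝ) (n : ℕ) {ι : Type} (t : Finset ι) (c : ι → ℕ) :
    penC L n (∑ i ∈ t, c i) = ∑ i ∈ t, penC L n (c i) := by
  unfold penC
  push_cast
  rw [Finset.mul_sum, Finset.sum_mul, Finset.sum_div]

variable (n x) in
/-- The criterion `γ` along a fixed path. -/
def gam (L : ℝ) (m : Finset (CubeIdx d)) : ℝ :=
  (∑ K ∈ m, ⨆ m' : MpartE d ⊤, (Tloc n x m' K - penC L n (veeCard d m' K)))
    + 2 * penC L n m.card

lemma gammaSel_eq {Ω : Type} (X : ℕ → Ω → (Fin d → ℝ)) (L : ℝ) (ω : Ω)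
    {m : Finset (CubeIdx d)} (hm : m ∈ MpartE d ⊤) :
    gammaSel d n X L ⊤ ω m = gam n (fun i => X i ω) L m := by
  obtain ⟨ℓ, h⟩ := mem_MpartE_top.1 hm
  unfold gammaSel gam
  congr 1
  refine Finset.sum_congr rfl fun K hK => iSup_congr fun m' => ?_
  obtain ⟨ℓ', h'⟩ := mem_MpartE_top.1 m'.2
  congr 1
  refine Finset.sum_congr rfl fun K' hK' => ?_
  have key : ∀ {ℓ : ℕ} {m : Finset (CubeIdx d)}, IsPartOf d ℓ (rootC d) m → ∀ K ∈ m,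
      ∀ p, histEst d n X m ω p * indC d K p = coef n (fun i => X i ω) K * indC d K p := by
    intro ℓ m h K hK p
    rcases indC_cases K p with h0 | h1
    · rw [h0]; ring
    · rw [histEst_eq, part_sum_mul h valid_root p hK (by rw [h1]; exact one_ne_zero)]
  refine Gfun_spec X ω _ _ (fun p => ?_) (fun p => ?_) fun p => ?_
  · rcases indC_cases K p with h0 | h0 <;> rcases indC_cases K' p with h1 | h1 <;> simp [h0, h1]
  · unfold restr2
    rw [key h K hK p]; ring
  · unfold restr2
    rw [mul_right_comm, key h' K' hK' p]; ring

lemma part_mem {ℓ : ℕ} {m : Finset (CubeIdx d)} (h : IsPartOf d ℓ (rootC d) m)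
    {K : CubeIdx d} (hK : K ∈ m) : validC K ∧ anc (rootC d) K :=
  ⟨part_valid h valid_root K hK, (part_anc h K hK).1⟩

lemma bdd_loc (hn : 0 < n) {L : ℝ} (hL : 0 ≤ L) {ℓ : ℕ} {m : Finset (CubeIdx d)}
    (h : IsPartOf d ℓ (rootC d) m) {K : CubeIdx d} (hK : K ∈ m) :
    BddAbove (Set.range fun m' : MpartE d ⊤ =>
      Tloc n x m' K - penC L n (veeCard d m' K)) := by
  refine ⟨3, ?_⟩
  rintro _ ⟨m', rfl⟩
  obtain ⟨ℓ', h'⟩ := mem_MpartE_top.1 m'.2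
  have h1 := abs_Tloc_le (x := x) hn h' (part_mem h hK).1 (part_mem h hK).2
  have h2 := penC_nonneg hL n (veeCard d m' K)
  have := le_abs_self (Tloc n x m' K)
  simp only
  linarith

lemma Tloc_self {ℓ : ℕ} {m : Finset (CubeIdx d)} (h : IsPartOf d ℓ (rootC d) m)
    {K : CubeIdx d} (hK : K ∈ m) : Tloc n x m K = 0 := by
  unfold Tloc
  rw [overlay_sum h valid_root (part_mem h hK).1
    (fun K' e => Gfun n x (coef n x K) (coef n x K') e) fun K' => Gfun_zero _ _]
  have : overlay m K = {K} := by
    unfold overlay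
    rw [if_pos ⟨K, hK, anc_refl _⟩]
  rw [this, Finset.sum_singleton, own_eq h hK (anc_refl _)]
  simp [Gfun, tb, psi]

/-- `γ(m) ≥ ∑_K (local comparison with m') + 2 pen(m)` for each competitor `m'`. -/
lemma le_gam (hn : 0 < n) {L : ℝ} (hL : 0 ≤ L) {ℓ ℓ' : ℕ} {m m' : Finset (CubeIdx d)}
    (h : IsPartOf d ℓ (rootC d) m) (h' : IsPartOf d ℓ' (rootC d) m') :
    ∑ K ∈ m, Tloc n x m' K - penC L n (∑ K ∈ m, veeCard d m' K) + 2 * penC L n m.card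
      ≤ gam n x L m := by
  unfold gam
  rw [penC_sum, ← Finset.sum_sub_distrib]
  gcongr with K hK
  exact le_ciSup (bdd_loc hn hL h hK) ⟨m', mem_MpartE_top.2 ⟨ℓ', h'⟩⟩

lemma gam_nonneg (hn : 0 < n) {L : ℝ} (hL : 0 ≤ L) {ℓ : ℕ} {m : Finset (CubeIdx d)}
    (h : IsPartOf d ℓ (rootC d) m) : 0 ≤ gam n x L m := by
  refine le_trans ?_ (le_gam hn hL h h)
  rw [Finset.sum_eq_zero fun K hK => Tloc_self h hK,
    Finset.sum_congr rfl fun K hK => veeCard_self h valid_root hK]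
  simp only [Finset.sum_const, smul_eq_mul, mul_one]
  linarith [penC_nonneg hL n m.card]

/-- Adding the two comparisons of `m` and `m'` leaves `2 α H²`. -/
lemma Tloc_add_symm {Ω : Type} (X : ℕ → Ω → (Fin d → ℝ)) (ω : Ω) {ℓ ℓ' : ℕ}
    {m m' : Finset (CubeIdx d)}
    (h : IsPartOf d ℓ (rootC d) m) (h' : IsPartOf d ℓ' (rootC d) m') :
    ∑ K ∈ m, Tloc n (fun i => X i ω) m' K + ∑ K ∈ m', Tloc n (fun i => X i ω) m K
      = 2 * alphaC * hellSq d n X ω (histEst d n X m ω) (histEst d n X m' ω) := by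
  set x := fun i => X i ω with hx
  have e1 : hellSq d n X ω (histEst d n X m ω) (histEst d n X m' ω)
      = 1 / (2 * n) * compSum n x (fun p => ∑ K ∈ m, ∑ K' ∈ m',
        (√(coef n x K) - √(coef n x K')) ^ 2 * (indC d K p * indC d K' p)) := by
    unfold hellSq compSum
    congr 1
    refine Finset.sum_congr rfl fun i _ => integral_congr_ae
      (Filter.Eventually.of_forall fun y => ?_)
    simp only [histEst_eq]
    exact sq_hist_hist h h' _ _ _
  have hfi : ∀ K K', FInt fun p => (√(coef n x K) - √(coef n x K')) ^ 2 *
      (indC d K p * indC d K' p) := fun K K' => (fint_indC2 K K').const_mul _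
  rw [e1, compSum_sum fun K _ => FInt.sum fun K' _ => hfi K K']
  unfold Tloc
  rw [Finset.sum_comm (s := m'), ← Finset.sum_add_distrib, Finset.mul_sum, Finset.mul_sum]
  refine Finset.sum_congr rfl fun K hK => ?_
  rw [compSum_sum fun K' _ => hfi K K', ← Finset.sum_add_distrib, Finset.mul_sum, Finset.mul_sum]
  refine Finset.sum_congr rfl fun K' hK' => ?_
  rw [compSum_const_mul]
  have e : (fun p => indC d K' p * indC d K p) = fun p => indC d K p * indC d K' p := by
    funext p; ring
  rw [e]
  unfold Gfun
  rw [psi_symm (coef n x K) (coef n x K')]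
  have ht := tb_symm (coef n x K) (coef n x K')
  have ht' : tb (coef n x K') (coef n x K) = alphaC * (√(coef n x K) - √(coef n x K')) ^ 2
    - tb (coef n x K) (coef n x K') := by linarith
  rw [ht']
  by_cases hn : (n : ℝ) = 0
  · simp [hn]
  · field_simp
    ring

/-- Any two partitions satisfy `2 α H²(ŝ_m, ŝ_m') ≤ γ(m) + γ(m')`. -/
lemma hell_le_gam {Ω : Type} (X : ℕ → Ω → (Fin d → ℝ)) (ω : Ω) (hn : 0 < n) {L : ℝ}
    (hL : 0 ≤ L) {ℓ ℓ' : ℕ} {m m' : Finset (CubeIdx d)}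
    (h : IsPartOf d ℓ (rootC d) m) (h' : IsPartOf d ℓ' (rootC d) m') :
    2 * alphaC * hellSq d n X ω (histEst d n X m ω) (histEst d n X m' ω)
      ≤ gam n (fun i => X i ω) L m + gam n (fun i => X i ω) L m' := by
  rw [← Tloc_add_symm X ω h h']
  have h1 := le_gam (x := fun i => X i ω) hn hL h h'
  have h2 := le_gam (x := fun i => X i ω) hn hL h' h
  have h3 := penC_mono hL n (sum_veeCard_le h h' valid_root)
  have h4 := penC_mono hL n (sum_veeCard_le h' h valid_root)
  rw [penC_add] at h3 h4
  linarith

/-- A sum of suprema is controlled through simultaneous choices of near-maximizers. -/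
lemma sum_ciSup_le {ι κ : Type} [Nonempty κ] (t : Finset ι) (f : ι → κ → ℝ) (B : ℝ)
    (h : ∀ p : ι → κ, ∑ i ∈ t, f i (p i) ≤ B) :
    ∑ i ∈ t, ⨆ k, f i k ≤ B := by
  refine le_of_forall_pos_le_add fun ε hε => ?_
  have hδ : 0 < ε / (t.card + 1) := by positivity
  have : ∀ i, ∃ k, i ∈ t → (⨆ k, f i k) - ε / (t.card + 1) < f i k := by
    intro i
    obtain ⟨k, hk⟩ := exists_lt_of_lt_ciSup (f := f i)
      (show (⨆ k, f i k) - ε / (t.card + 1) < ⨆ k, f i k by linarith)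
    exact ⟨k, fun _ => hk⟩
  choose p hp using this
  have h1 : ∑ i ∈ t, ⨆ k, f i k ≤ ∑ i ∈ t, (f i (p i) + ε / (t.card + 1)) :=
    Finset.sum_le_sum fun i hi => by linarith [hp i hi]
  rw [Finset.sum_add_distrib, Finset.sum_const, nsmul_eq_mul] at h1
  have h2 : (t.card : ℝ) * (ε / (t.card + 1)) ≤ ε := by
    rw [← mul_div_assoc, div_le_iff₀ (by positivity)]
    nlinarith
  linarith [h p]

/-! ### The pointwise inequality -/

lemma pointwise_core {a β γ r k q : ℝ} (ha : 0 ≤ a) (hβ : 0 ≤ β) (hγ : 0 ≤ γ) (hr : 0 < r)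
    (hr2 : 2 * r ^ 2 = β ^ 2 + γ ^ 2) (hk : 0.7 ≤ k) (hk' : k ≤ 0.708) (hk2 : 2 * k ^ 2 = 1)
    (hq : q * r = k * (γ - β)) :
    (1 - k) / 2 / 2 * (β - γ) ^ 2 + r * (γ - β) / 2
      + k * (q + 1 / 100 * q ^ 2) * a ^ 2
      + (β ^ 2 - γ ^ 2) / 2 ≤ 3 / 2 * (a - β) ^ 2 := by
  have hX := sq_nonneg (a - β)
  have hY := sq_nonneg (a - γ)
  have h2r : β + γ ≤ 2 * r := abs_le_of_sq_le_sq' (by nlinarith [sq_nonneg (β - γ)])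
    (by linarith) |>.2
  have hra : (r - a) ^ 2 ≤ ((a - β) ^ 2 + (a - γ) ^ 2) / 2 := by nlinarith
  have hqr : (q * r) ^ 2 ≤ (a - β) ^ 2 + (a - γ) ^ 2 := by
    rw [hq]; nlinarith [sq_nonneg (2 * a - β - γ)]
  have hq1 : q ^ 2 ≤ 1 := by
    have : (q * r) ^ 2 ≤ 1 * r ^ 2 := by
      rw [hq]; nlinarith [mul_nonneg hβ hγ]
    rw [mul_pow] at this
    exact le_of_mul_le_mul_right this (by positivity)
  have hqle : q ≤ 1 := by nlinarith
  have hqa : q ^ 2 * a ^ 2 ≤ 3 * ((a - β) ^ 2 + (a - γ) ^ 2) := by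
    have h1 : a ^ 2 ≤ 2 * (r ^ 2 + (r - a) ^ 2) := by nlinarith [sq_nonneg (2 * r - a)]
    have h2 := mul_le_mul_of_nonneg_left h1 (sq_nonneg q)
    rw [mul_pow] at hqr
    have h3 : q ^ 2 * (r - a) ^ 2 ≤ (r - a) ^ 2 := mul_le_of_le_one_left (sq_nonneg _) hq1
    linarith
  have hT : r * (γ - β) / 2 + k * q * a ^ 2 + (β ^ 2 - γ ^ 2) / 2
      = k * q * (r - a) ^ 2 + ((a - β) ^ 2 - (a - γ) ^ 2) / 2 := by
    have e1 : k * (q * r) = (γ - β) / 2 := by rw [hq]; linear_combination (γ - β) / 2 * hk2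
    linear_combination (2 * a - r) * e1
  have h4 : k * q * (r - a) ^ 2 ≤ k * (((a - β) ^ 2 + (a - γ) ^ 2) / 2) := by
    have : q * (r - a) ^ 2 ≤ (r - a) ^ 2 := mul_le_of_le_one_left (sq_nonneg _) hqle
    rw [mul_assoc]
    exact mul_le_mul_of_nonneg_left (this.trans hra) (by linarith)
  have h5 : (β - γ) ^ 2 ≤ 3 * (a - β) ^ 2 + 3 / 2 * (a - γ) ^ 2 := by
    nlinarith [sq_nonneg (2 * (a - β) + (a - γ))]
  have h6 : (1 - k) / 2 / 2 * (β - γ) ^ 2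
      ≤ (1 - k) / 2 / 2 * (3 * (a - β) ^ 2 + 3 / 2 * (a - γ) ^ 2) :=
    mul_le_mul_of_nonneg_left h5 (by linarith)
  have h7 : k * (1 / 100 * q ^ 2) * a ^ 2
      ≤ k / 100 * (3 * ((a - β) ^ 2 + (a - γ) ^ 2)) := by
    have := mul_le_mul_of_nonneg_left hqa (by linarith : 0 ≤ k / 100)
    linarith
  have h8 := mul_nonneg hX (by linarith : 0 ≤ k)
  have h9 := mul_nonneg hY (by linarith : 0 ≤ 0.708 - k)
  have h10 : k * (q + 1 / 100 * q ^ 2) * a ^ 2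
      = k * q * a ^ 2 + k * (1 / 100 * q ^ 2) * a ^ 2 := by ring
  rw [h10]
  generalize k * (1 / 100 * q ^ 2) * a ^ 2 = z1 at *
  generalize (1 - k) / 2 / 2 * (β - γ) ^ 2 = z2 at *
  generalize k * q * (r - a) ^ 2 = z3 at *
  generalize k * q * a ^ 2 = z4 at *
  generalize (a - β) ^ 2 = X at *
  generalize (a - γ) ^ 2 = Y at *
  linarith

/-- The drift of the test, perturbed by a small quadratic term, is bounded by the loss. -/
lemma pointwise_ineq {u b c : ℝ} (hu : 0 ≤ u) (hb : 0 ≤ b) (hc : 0 ≤ c) :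
    tb b c + 1 / √2 * (psi b c + 1 / 100 * psi b c ^ 2) * u ≤ 3 / 2 * (√u - √b) ^ 2 := by
  have h2 : (0 : ℝ) < √2 := by positivity
  have h22 : √2 * √2 = (2 : ℝ) := Real.mul_self_sqrt (by norm_num)
  rcases (add_nonneg hb hc).eq_or_lt with h0 | h0
  · have hb0 : b = 0 := by linarith
    have hc0 : c = 0 := by linarith
    subst hb0 hc0
    simp [tb, psi]
  · have hsp : 0 < √(b + c) := Real.sqrt_pos.2 h0
    have := pointwise_core (a := √u) (β := √b) (γ := √c) (r := 1 / √2 * √(b + c)) (k := 1 / √2)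
      (q := psi b c) (Real.sqrt_nonneg _) (Real.sqrt_nonneg _) (Real.sqrt_nonneg _) (by positivity)
      (by
        rw [mul_pow, Real.sq_sqrt h0.le, Real.sq_sqrt hb, Real.sq_sqrt hc, div_pow,
          Real.sq_sqrt (by norm_num)]; ring)
      inv_sqrt_two.2 inv_sqrt_two.1
      (by rw [div_pow, Real.sq_sqrt (by norm_num)]; norm_num)
      (by unfold psi; field_simp)
    rw [Real.sq_sqrt hu, Real.sq_sqrt hb, Real.sq_sqrt hc] at this
    refine le_trans (le_of_eq ?_) this
    unfold tb alphaC
    field_simp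
    ring

end

noncomputable section
open Classical

variable {d : ℕ} {n : ℕ} {x : ℕ → Fin d → ℝ} {s : (Fin d → ℝ) → (Fin d → ℝ) → ℝ}

/-! ### Uniform control of the test statistic -/

variable (d n) in
/-- A finite set containing every value of a histogram estimator on a cube of level `≤ n²`. -/
def Vset : Finset ℝ :=
  (Finset.range (n + 1) ×ˢ Finset.range (n + 1) ×ˢ Finset.range (n ^ 2 + 1)).image
    fun t => (t.1 : ℝ) * (2 ^ t.2.2) ^ d / t.2.1

lemma card_Vset (hn : 3 < n) : (Vset d n).card ≤ n ^ 6 := by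
  refine Finset.card_image_le.trans ?_
  simp only [Finset.card_product, Finset.card_range]
  have h1 : (n + 1) * (n + 1) ≤ n ^ 3 := by nlinarith [Nat.mul_le_mul hn hn]
  have h2 : n ^ 2 + 1 ≤ n ^ 3 := by nlinarith
  calc (n + 1) * ((n + 1) * (n ^ 2 + 1)) = (n + 1) * (n + 1) * (n ^ 2 + 1) := by ring
    _ ≤ n ^ 3 * n ^ 3 := Nat.mul_le_mul h1 h2
    _ = n ^ 6 := by ring

lemma coef_mem {K : CubeIdx d} (hK : K.1 ≤ n ^ 2) : coef n x K ∈ Vset d n := by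
  refine Finset.mem_image.2
    ⟨(((Finset.range n).filter fun i => pairPt d (x i) (x (i + 1)) ∈ cubeSet d K).card,
      ((Finset.range n).filter fun i => x i ∈ cubeL K).card, K.1), ?_, ?_⟩
  · have h1 := Finset.card_filter_le (Finset.range n)
      fun i => pairPt d (x i) (x (i + 1)) ∈ cubeSet d K
    have h2 := Finset.card_filter_le (Finset.range n) fun i => x i ∈ cubeL K
    rw [Finset.card_range] at h1 h2
    simp only [Finset.mem_product, Finset.mem_range]
    omega
  · have e1 : empSum n x (indC d K) = (((Finset.range n).filter
        fun i => pairPt d (x i) (x (i + 1)) ∈ cubeSet d K).card : ℝ) := by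
      simp only [empSum, indC_eq, Finset.sum_boole]
    have e2 : compSum n x (indC d K)
        = (((Finset.range n).filter fun i => x i ∈ cubeL K).card : ℝ) * (1 / 2 ^ K.1) ^ d := by
      simp only [compSum, integral_indC, ← Finset.sum_mul, Set.indicator_apply, Pi.one_apply,
        Finset.sum_boole]
    unfold coef
    simp only [e1, e2]
    rw [one_div, inv_pow, ← div_eq_mul_inv, div_div_eq_mul_div]

variable (n x s) in
/-- The conditional mean sum `∑_{i<n} ∫ 1_Q(x_i,y) s(x_i,y) dy` of the counts of `Q`. -/
def smass (Q : CubeIdx d) : ℝ := compSum n x fun p => indC d Q p * s p.1 p.2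

variable (n x s) in
/-- The event on which all weighted counts attached to the tests are close to their
compensators, simultaneously over partitions and over pairs of values. -/
def Good1 : Prop :=
  ∀ m, IsPartOf d (n ^ 2) (rootC d) m → ∀ v : CubeIdx d → ℝ × ℝ,
    (∀ Q ∈ m, v Q ∈ Vset d n ×ˢ Vset d n) →
    ∑ Q ∈ m, (psi (v Q).1 (v Q).2 / 100 * empSum n x (indC d Q)
      - (exp (psi (v Q).1 (v Q).2 / 100) - 1) * smass n x s Q) < 14 * Real.log n * m.card

lemma prob_good1 {Ω : Type} [MeasurableSpace Ω] {P : Measure Ω} [IsProbabilityMeasure P]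
    {X : ℕ → Ω → (Fin d → ℝ)} (hd : 0 < d) (hn : 3 < n) (hX : MarkovDensity P n X s) :
    P.real {ω | ¬ Good1 n (fun i => X i ω) s} ≤ 2 / (n : ℝ) ^ 2 := by
  have hn' : (0 : ℝ) < n := by exact_mod_cast (by omega : 0 < n)
  have hn4 : (4 : ℝ) ≤ n := by exact_mod_cast hn
  have hw : 1 / (n : ℝ) ^ 2 ≤ 1 / 4 := by
    refine one_div_le_one_div_of_le (by norm_num) (by nlinarith)
  obtain ⟨F, hF, hFw⟩ := part_weight hd (w := 1 / (n : ℝ) ^ 2) (by positivity) hw (n ^ 2) (rootC d)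
  let ext : (m : Finset (CubeIdx d)) → ((Q : CubeIdx d) → Q ∈ m → ℝ × ℝ) → CubeIdx d → ℝ :=
    fun m f Q => if h : Q ∈ m then psi (f Q h).1 (f Q h).2 / 100 else 0
  let E : (m : Finset (CubeIdx d)) → ((Q : CubeIdx d) → Q ∈ m → ℝ × ℝ) → Set Ω :=
    fun m f => {ω | 14 * Real.log n * m.card ≤ ∑ Q ∈ m,
      (ext m f Q * empSum n (fun i => X i ω) (indC d Q) - (exp (ext m f Q) - 1) *
        compSum n (fun i => X i ω) fun p => indC d Q p * s p.1 p.2)}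
  let W : Finset (ℝ × ℝ) := Vset d n ×ˢ Vset d n
  have hsub : {ω | ¬ Good1 n (fun i => X i ω) s} ⊆
      ⋃ m ∈ F, ⋃ f ∈ Finset.pi m fun _ => W, E m f := by
    intro ω hω
    simp only [Good1, Set.mem_ofPred_eq] at hω
    push Not at hω
    obtain ⟨m, hm, v, hv, hle⟩ := hω
    simp only [Set.mem_iUnion]
    refine ⟨m, (hF m).1 hm, fun Q _ => v Q, Finset.mem_pi.2 fun Q hQ => hv Q hQ, ?_⟩
    refine hle.trans (le_of_eq ?_)
    refine Finset.sum_congr rfl fun Q hQ => ?_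
    simp only [ext, dif_pos hQ, smass]
  have hE : ∀ m ∈ F, ∀ f, P.real (E m f) ≤ ((1 / (n : ℝ) ^ 14)) ^ m.card := by
    intro m hm f
    refine (deviation hX ((hF m).2 hm) (ext m f) _).trans (le_of_eq ?_)
    rw [one_div, inv_pow, ← pow_mul, Real.exp_neg]
    congr 1
    rw [← Real.exp_log (by positivity : (0 : ℝ) < (n : ℝ) ^ (14 * m.card)), Real.log_pow]
    push_cast
    congr 1; ring
  have hW : ∀ m : Finset (CubeIdx d), ((Finset.pi m fun _ => W).card : ℝ)
      ≤ ((n : ℝ) ^ 12) ^ m.card := by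
    intro m
    rw [Finset.card_pi, Finset.prod_const]
    have : W.card ≤ n ^ 12 := by
      rw [Finset.card_product]
      calc _ ≤ n ^ 6 * n ^ 6 := Nat.mul_le_mul (card_Vset hn) (card_Vset hn)
        _ = n ^ 12 := by ring
    exact_mod_cast Nat.pow_le_pow_left this _
  calc P.real {ω | ¬ Good1 n (fun i => X i ω) s}
      ≤ P.real (⋃ m ∈ F, ⋃ f ∈ Finset.pi m fun _ => W, E m f) :=
        measureReal_mono hsub (measure_ne_top _ _)
    _ ≤ ∑ m ∈ F, P.real (⋃ f ∈ Finset.pi m fun _ => W, E m f) :=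
        measureReal_biUnion_finset_le _ _
    _ ≤ ∑ m ∈ F, (1 / (n : ℝ) ^ 2) ^ m.card := by
        refine Finset.sum_le_sum fun m hm => ?_
        calc _ ≤ ∑ f ∈ Finset.pi m fun _ => W, P.real (E m f) :=
              measureReal_biUnion_finset_le _ _
          _ ≤ ∑ f ∈ Finset.pi m fun _ => W, (1 / (n : ℝ) ^ 14) ^ m.card :=
              Finset.sum_le_sum fun f _ => hE m hm f
          _ ≤ ((n : ℝ) ^ 12) ^ m.card * (1 / (n : ℝ) ^ 14) ^ m.card := by
              rw [Finset.sum_const, nsmul_eq_mul]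
              exact mul_le_mul_of_nonneg_right (hW m) (by positivity)
          _ = (1 / (n : ℝ) ^ 2) ^ m.card := by
              rw [← mul_pow]; congr 1; field_simp
    _ ≤ 2 * (1 / (n : ℝ) ^ 2) := hFw
    _ = 2 / (n : ℝ) ^ 2 := by ring

lemma measurable_section (hs : Measurable (Function.uncurry s)) (u : Fin d → ℝ) :
    Measurable (s u) := hs.comp measurable_prodMk_left

lemma fint_indC_s (hone : ∀ x, ∫ y, s x y = 1) (K : CubeIdx d) :
    FInt fun p => indC d K p * s p.1 p.2 := fun u => integrable_indC_s hone K u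

lemma fint_loss (hs : Measurable (Function.uncurry s)) (hnn : ∀ x y, 0 ≤ s x y)
    (hone : ∀ x, ∫ y, s x y = 1) (K : CubeIdx d) (b : ℝ) :
    FInt fun p => indC d K p * (√(s p.1 p.2) - b) ^ 2 := by
  intro u
  have hi := ((integrable_indC_s hone K u).const_mul 2).add
    ((integrable_indC K u).const_mul (2 * b ^ 2))
  refine hi.mono' ?_ (Filter.Eventually.of_forall fun y => ?_)
  · exact (((measurable_indC K).comp measurable_prodMk_left).mul
      (((measurable_section hs u).sqrt.sub_const b).pow_const 2)).aestronglyMeasurable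
  · have h0 := indC_nonneg K (u, y)
    rw [Real.norm_of_nonneg (by positivity)]
    have h1 : (√(s u y) - b) ^ 2 ≤ 2 * s u y + 2 * b ^ 2 := by
      nlinarith [Real.sq_sqrt (hnn u y), sq_nonneg (√(s u y) + b)]
    have := mul_le_mul_of_nonneg_left h1 h0
    simp only [Pi.add_apply]
    linarith

variable (n x s) in
/-- `H²(s 1_A, ŝ_m)` along a fixed path, cube by cube. -/
def loss (m : Finset (CubeIdx d)) : ℝ :=
  1 / (2 * n) * ∑ K ∈ m, compSum n x fun p => indC d K p * (√(s p.1 p.2) - √(coef n x K)) ^ 2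

lemma loss_eq {Ω : Type} (X : ℕ → Ω → (Fin d → ℝ)) (ω : Ω)
    (hs : Measurable (Function.uncurry s)) (hnn : ∀ x y, 0 ≤ s x y)
    (hone : ∀ x, ∫ y, s x y = 1) {ℓ : ℕ} {m : Finset (CubeIdx d)}
    (h : IsPartOf d ℓ (rootC d) m) :
    hellSq d n X ω (sIndA d s) (histEst d n X m ω) = loss n (fun i => X i ω) s m := by
  unfold hellSq loss
  rw [← compSum_sum fun K _ => fint_loss hs hnn hone K _]
  unfold compSum
  congr 1
  refine Finset.sum_congr rfl fun i _ => integral_congr_ae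
    (Filter.Eventually.of_forall fun y => ?_)
  simp only [histEst_eq]
  exact sq_s_hist h s _ _

/-- Integrated form of the pointwise inequality on a cube. -/
lemma drift_le (hs : Measurable (Function.uncurry s)) (hnn : ∀ x y, 0 ≤ s x y)
    (hone : ∀ x, ∫ y, s x y = 1) {b c : ℝ} (hb : 0 ≤ b) (hc : 0 ≤ c) (Q : CubeIdx d) :
    tb b c * compSum n x (indC d Q) + 1 / √2 * (psi b c + 1 / 100 * psi b c ^ 2) * smass n x s Q
      ≤ 3 / 2 * compSum n x fun p => indC d Q p * (√(s p.1 p.2) - √b) ^ 2 := by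
  unfold smass
  rw [← compSum_const_mul, ← compSum_const_mul, ← compSum_const_mul,
    ← compSum_add ((fint_indC Q).const_mul _) ((fint_indC_s hone Q).const_mul _)]
  refine compSum_mono (((fint_indC Q).const_mul _).add ((fint_indC_s hone Q).const_mul _))
    ((fint_loss hs hnn hone Q _).const_mul _) fun p => ?_
  have := mul_le_mul_of_nonneg_left (pointwise_ineq (hnn p.1 p.2) hb hc) (indC_nonneg Q p)
  linarith

lemma exp_psi_le {q : ℝ} (hq : |q| ≤ 1) : exp (q / 100) - 1 ≤ (q + 1 / 100 * q ^ 2) / 100 := by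
  have h1 : |q / 100| ≤ 1 := by
    rw [abs_div, abs_of_pos (by norm_num : (0 : ℝ) < 100)]; linarith [abs_nonneg q]
  have := (abs_le.1 (Real.abs_exp_sub_one_sub_id_le h1)).2
  nlinarith

lemma one_le_log (hn : 3 < n) : 1 ≤ Real.log n := by
  rw [Real.le_log_iff_exp_le (by exact_mod_cast (by omega : 0 < n))]
  have : (4 : ℝ) ≤ n := by exact_mod_cast hn
  linarith [Real.exp_one_lt_d9]

/-- On the good event, simultaneous local comparisons are bounded by the loss of `m`. -/
lemma loc_bound (hd : 0 < d) (hn : 3 < n) (hs : Measurable (Function.uncurry s))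
    (hnn : ∀ x y, 0 ≤ s x y) (hone : ∀ x, ∫ y, s x y = 1) (hg : Good1 n x s) {ℓ : ℕ}
    {m : Finset (CubeIdx d)} (h : IsPartOf d ℓ (rootC d) m) (hmc : m.card ≤ n)
    (p : CubeIdx d → MpartE d ⊤) :
    ∑ K ∈ m, (Tloc n x (p K) K - penC 1000 n (veeCard d (p K) K)) ≤ 3 * loss n x s m := by
  have hlog := one_le_log hn
  have hn' : (0 : ℝ) < n := by exact_mod_cast (by omega : 0 < n)
  have hp : ∀ K, ∃ ℓ', IsPartOf d ℓ' (rootC d) (p K) := fun K => mem_MpartE_top.1 (p K).2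
  have hl0 : 0 ≤ loss n x s m := by
    unfold loss
    refine mul_nonneg (by positivity) (Finset.sum_nonneg fun K _ => compSum_nonneg fun q => ?_)
    exact mul_nonneg (indC_nonneg _ _) (sq_nonneg _)
  rw [Finset.sum_sub_distrib, ← penC_sum]
  set T := ∑ K ∈ m, veeCard d (p K) K with hT
  by_cases hbig : n ^ 2 < T
  · -- the penalty alone exceeds the a priori bound on the local comparisons
    have h1 : ∑ K ∈ m, Tloc n x (p K) K ≤ 3 * n := by
      calc _ ≤ ∑ K ∈ m, (3 : ℝ) := by
            refine Finset.sum_le_sum fun K hK => ?_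
            obtain ⟨ℓ', h'⟩ := hp K
            exact (le_abs_self _).trans
              (abs_Tloc_le (by omega) h' (part_mem h hK).1 (part_mem h hK).2)
        _ = 3 * m.card := by rw [Finset.sum_const, nsmul_eq_mul]; ring
        _ ≤ 3 * n := by
            have : (m.card : ℝ) ≤ n := by exact_mod_cast hmc
            linarith
    have h2 : 3 * (n : ℝ) ≤ penC 1000 n T := by
      unfold penC
      rw [le_div_iff₀ hn']
      have : (n : ℝ) ^ 2 ≤ T := by exact_mod_cast hbig.le
      nlinarith [mul_le_mul this hlog (by norm_num) (by positivity)]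
    linarith
  · push Not at hbig
    let f : CubeIdx d → Finset (CubeIdx d) := fun K => overlay (p K) K
    set m'' := m.biUnion f with hm''
    -- a common depth for the finitely many competitors
    choose ℓ' hℓ' using hp
    have hf : ∀ K ∈ m, IsPartOf d (m.sup ℓ') K (f K) := fun K hK =>
      part_mono (overlay_part (hℓ' K) (part_mem h hK).2) _ (Finset.le_sup hK)
    have hpart := part_glue h f hf
    have hdisj : (m : Set (CubeIdx d)).PairwiseDisjoint f := by
      intro K hK K' hK' hne
      refine Finset.disjoint_left.2 fun Q hQ hQ' => hne ?_
      exact part_unique' h hK hK' (part_anc (hf K hK) Q hQ).1 (part_anc (hf K' hK') Q hQ').1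
    have hcardT : m''.card ≤ T := by
      refine Finset.card_biUnion_le.trans (Finset.sum_le_sum fun K hK => ?_)
      exact overlay_card (hℓ' K) valid_root (part_mem h hK).1
    have hpart2 : IsPartOf d (n ^ 2) (rootC d) m'' :=
      part_mono (part_depth hd hpart) _ (hcardT.trans hbig)
    have hlev : ∀ Q ∈ m'', Q.1 ≤ n ^ 2 := fun Q hQ => by
      simpa [rootC] using (part_anc hpart2 Q hQ).2
    let b : CubeIdx d → ℝ := fun Q => coef n x (own m Q)
    let c : CubeIdx d → ℝ := fun Q => coef n x (own (p (own m Q)) Q)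
    have hown : ∀ K ∈ m, ∀ Q ∈ f K, own m Q = K := fun K hK Q hQ =>
      own_eq h hK (part_anc (hf K hK) Q hQ).1
    have hv : ∀ Q ∈ m'', (b Q, c Q) ∈ Vset d n ×ˢ Vset d n := by
      intro Q hQ
      obtain ⟨K, hK, hQK⟩ := Finset.mem_biUnion.1 hQ
      have e := hown K hK Q hQK
      refine Finset.mem_product.2 ⟨coef_mem ?_, coef_mem ?_⟩
      · rw [e]
        exact (part_anc (hf K hK) Q hQK).1.1.trans (hlev Q hQ)
      · rw [e]
        exact (overlay_own (hℓ' K) hQK).2.1.trans (hlev Q hQ)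
    have hgood := hg m'' hpart2 (fun Q => (b Q, c Q)) hv
    have e1 : ∑ K ∈ m, Tloc n x (p K) K = ∑ Q ∈ m'', Gfun n x (b Q) (c Q) (indC d Q) := by
      rw [hm'', Finset.sum_biUnion hdisj]
      refine Finset.sum_congr rfl fun K hK => ?_
      unfold Tloc
      rw [overlay_sum (hℓ' K) valid_root (part_mem h hK).1
        (fun K' e => Gfun n x (coef n x K) (coef n x K') e) fun K' => Gfun_zero _ _]
      refine Finset.sum_congr rfl fun Q hQ => ?_
      simp only [b, c, hown K hK Q hQ]
    have e2 : ∑ Q ∈ m'', compSum n x (fun p => indC d Q p * (√(s p.1 p.2) - √(b Q)) ^ 2)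
        = ∑ K ∈ m, compSum n x
          fun p => indC d K p * (√(s p.1 p.2) - √(coef n x K)) ^ 2 := by
      rw [hm'', Finset.sum_biUnion hdisj]
      refine Finset.sum_congr rfl fun K hK => ?_
      rw [← compSum_sum fun Q _ => fint_loss hs hnn hone Q _]
      congr 1
      funext q
      rw [← part_sum (hf K hK) (part_mem h hK).1 q, Finset.sum_mul]
      refine Finset.sum_congr rfl fun Q hQ => ?_
      simp only [b, hown K hK Q hQ]
    have hk0 : (0 : ℝ) ≤ 1 / √2 := by positivity
    have e3 : ∑ Q ∈ m'', (tb (b Q) (c Q) * compSum n x (indC d Q)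
          + 1 / √2 * psi (b Q) (c Q) * empSum n x (indC d Q))
        ≤ 3 / 2 * ∑ Q ∈ m'', compSum n x
            (fun p => indC d Q p * (√(s p.1 p.2) - √(b Q)) ^ 2)
          + 1 / √2 * 100 * (14 * Real.log n * m''.card) := by
      have h1 : ∀ Q ∈ m'', tb (b Q) (c Q) * compSum n x (indC d Q)
          + 1 / √2 * psi (b Q) (c Q) * empSum n x (indC d Q)
          ≤ 3 / 2 * compSum n x (fun p => indC d Q p * (√(s p.1 p.2) - √(b Q)) ^ 2)
          + 1 / √2 * 100 * (psi (b Q) (c Q) / 100 * empSum n x (indC d Q)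
            - (exp (psi (b Q) (c Q) / 100) - 1) * smass n x s Q) := by
        intro Q _
        have h2 := drift_le (n := n) (x := x) hs hnn hone (coef_nonneg (n := n) (x := x) (own m Q))
          (coef_nonneg (n := n) (x := x) (own (p (own m Q)) Q)) Q
        have h3 := exp_psi_le (abs_psi_le (coef_nonneg (n := n) (x := x) (own m Q))
          (coef_nonneg (n := n) (x := x) (own (p (own m Q)) Q)))
        have h4 : 0 ≤ smass n x s Q := compSum_nonneg fun q =>
          mul_nonneg (indC_nonneg _ _) (hnn _ _)
        have h5 := mul_le_mul_of_nonneg_left (mul_le_mul_of_nonneg_right h3 h4) hk0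
        simp only [b, c]
        linarith
      refine (Finset.sum_le_sum h1).trans ?_
      rw [Finset.sum_add_distrib, ← Finset.mul_sum, ← Finset.mul_sum]
      have := mul_le_mul_of_nonneg_left hgood.le (by positivity : (0 : ℝ) ≤ 1 / √2 * 100)
      linarith
    have e4 : 1 / (n : ℝ) * (1 / √2 * 100 * (14 * Real.log n * m''.card)) ≤ penC 1000 n T := by
      unfold penC
      have hc : (m''.card : ℝ) ≤ T := by exact_mod_cast hcardT
      rw [one_div_mul_eq_div]
      refine div_le_div_of_nonneg_right ?_ hn'.le
      have h1 : 1 / √2 * 100 * 14 ≤ 1000 := by linarith [inv_sqrt_two.1]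
      calc 1 / √2 * 100 * (14 * Real.log n * m''.card)
          = 1 / √2 * 100 * 14 * m''.card * Real.log n := by ring
        _ ≤ 1000 * T * Real.log n := by gcongr
    rw [e1]
    unfold Gfun
    rw [← Finset.mul_sum]
    have e5 := mul_le_mul_of_nonneg_left e3 (by positivity : (0 : ℝ) ≤ 1 / n)
    rw [mul_add, e2] at e5
    have e6 : 3 * loss n x s m = 1 / (n : ℝ) * (3 / 2 * ∑ K ∈ m, compSum n x
          fun p => indC d K p * (√(s p.1 p.2) - √(coef n x K)) ^ 2) := by
      unfold loss; ring
    rw [e6]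
    linarith

/-- Upper bound on the criterion on the good event. -/
lemma gam_le (hd : 0 < d) (hn : 3 < n) (hs : Measurable (Function.uncurry s))
    (hnn : ∀ x y, 0 ≤ s x y) (hone : ∀ x, ∫ y, s x y = 1) (hg : Good1 n x s) {ℓ : ℕ}
    {m : Finset (CubeIdx d)} (h : IsPartOf d ℓ (rootC d) m) (hmc : m.card ≤ n) :
    gam n x 1000 m ≤ 3 * loss n x s m + 2 * penC 1000 n m.card := by
  have hne : Nonempty (MpartE d ⊤) := ⟨⟨m, mem_MpartE_top.2 ⟨ℓ, h⟩⟩⟩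
  unfold gam
  have := sum_ciSup_le m (fun K (m' : MpartE d ⊤) =>
    Tloc n x m' K - penC 1000 n (veeCard d m' K)) _ fun p =>
      loc_bound hd hn hs hnn hone hg h hmc p
  linarith

end

noncomputable section
open Classical

variable {d : ℕ} {n : ℕ} {x : ℕ → Fin d → ℝ} {s : (Fin d → ℝ) → (Fin d → ℝ) → ℝ}

/-! ### Oracle inequality on the good event -/

lemma loss_nonneg (m : Finset (CubeIdx d)) : 0 ≤ loss n x s m := by
  unfold loss
  refine mul_nonneg (by positivity) (Finset.sum_nonneg fun K _ => compSum_nonneg fun q => ?_)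
  exact mul_nonneg (indC_nonneg _ _) (sq_nonneg _)

lemma compSum_s_le (hnn : ∀ x y, 0 ≤ s x y) (hone : ∀ x, ∫ y, s x y = 1) :
    compSum n x (fun p => indC d (rootC d) p * s p.1 p.2) ≤ n := by
  calc _ ≤ compSum n x (fun p => s p.1 p.2) :=
        compSum_mono (fint_indC_s hone _) (fun u => integrable_s hone u) fun p =>
          mul_le_of_le_one_left (hnn _ _) (indC_le_one _ _)
    _ = n := by simp [compSum, hone]

lemma loss_le_one (hs : Measurable (Function.uncurry s))
    (hnn : ∀ x y, 0 ≤ s x y) (hone : ∀ x, ∫ y, s x y = 1) {ℓ : ℕ} {m : Finset (CubeIdx d)}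
    (h : IsPartOf d ℓ (rootC d) m) : loss n x s m ≤ 1 := by
  have h1 : ∀ K ∈ m, compSum n x (fun p => indC d K p * (√(s p.1 p.2) - √(coef n x K)) ^ 2)
      ≤ smass n x s K + empSum n x (indC d K) := by
    intro K _
    rw [← coef_mul, smass, ← compSum_const_mul,
      ← compSum_add (fint_indC_s hone K) ((fint_indC K).const_mul _)]
    refine compSum_mono (fint_loss hs hnn hone K _)
      ((fint_indC_s hone K).add ((fint_indC K).const_mul _)) fun p => ?_
    have hc := coef_nonneg (n := n) (x := x) K
    have h2 : (√(s p.1 p.2) - √(coef n x K)) ^ 2 ≤ s p.1 p.2 + coef n x K := by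
      nlinarith [Real.sq_sqrt (hnn p.1 p.2), Real.sq_sqrt hc,
        mul_nonneg (Real.sqrt_nonneg (s p.1 p.2)) (Real.sqrt_nonneg (coef n x K))]
    have := mul_le_mul_of_nonneg_left h2 (indC_nonneg K p)
    linarith
  have h2 : ∑ K ∈ m, smass n x s K ≤ n := by
    refine le_trans (le_of_eq ?_) (compSum_s_le (n := n) (x := x) hnn hone)
    unfold smass
    rw [← compSum_sum fun K _ => fint_indC_s hone K]
    congr 1; funext p
    rw [← part_sum h valid_root p, Finset.sum_mul]
  have h3 : ∑ K ∈ m, empSum n x (indC d K) ≤ n := by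
    refine le_trans (le_of_eq ?_) (empSum_indC_le (n := n) (x := x) (rootC d))
    rw [← empSum_sum]
    congr 1; funext p
    exact part_sum h valid_root p
  have h4 := Finset.sum_le_sum h1
  rw [Finset.sum_add_distrib] at h4
  unfold loss
  rcases Nat.eq_zero_or_pos n with hn | hn
  · simp [hn]
  have hn' : (0 : ℝ) < n := by exact_mod_cast hn
  rw [one_div_mul_eq_div, div_le_one (by positivity)]
  linarith

/-- Triangle inequality (with a factor `2`) for the squared distance. -/
lemma hell_triangle {Ω : Type} (X : ℕ → Ω → (Fin d → ℝ)) (ω : Ω)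
    (hs : Measurable (Function.uncurry s)) (hnn : ∀ x y, 0 ≤ s x y)
    (hone : ∀ x, ∫ y, s x y = 1) {ℓ ℓ' : ℕ} {m m' : Finset (CubeIdx d)}
    (h : IsPartOf d ℓ (rootC d) m) (h' : IsPartOf d ℓ' (rootC d) m') :
    hellSq d n X ω (sIndA d s) (histEst d n X m' ω)
      ≤ 2 * hellSq d n X ω (sIndA d s) (histEst d n X m ω)
        + 2 * hellSq d n X ω (histEst d n X m ω) (histEst d n X m' ω) := by
  have f1 : ∀ {ℓ : ℕ} {m : Finset (CubeIdx d)}, IsPartOf d ℓ (rootC d) m →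
      FInt fun p => (√(sIndA d s p) - √(histEst d n X m ω p)) ^ 2 := by
    intro ℓ m h
    have e : (fun p => (√(sIndA d s p) - √(histEst d n X m ω p)) ^ 2) = fun p =>
        ∑ K ∈ m, indC d K p * (√(s p.1 p.2) - √(coef n (fun i => X i ω) K)) ^ 2 := by
      funext p; simp only [histEst_eq]; exact sq_s_hist h s _ p
    rw [e]
    exact FInt.sum fun K _ => fint_loss hs hnn hone K _
  have f2 : FInt fun p => (√(histEst d n X m ω p) - √(histEst d n X m' ω p)) ^ 2 := by
    have e : (fun p => (√(histEst d n X m ω p) - √(histEst d n X m' ω p)) ^ 2) = fun p =>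
        ∑ K ∈ m, ∑ K' ∈ m', (√(coef n (fun i => X i ω) K) - √(coef n (fun i => X i ω) K')) ^ 2
          * (indC d K p * indC d K' p) := by
      funext p; simp only [histEst_eq]; exact sq_hist_hist h h' _ _ p
    rw [e]
    exact FInt.sum fun K _ => FInt.sum fun K' _ => (fint_indC2 K K').const_mul _
  have key := compSum_mono (n := n) (x := fun i => X i ω) (f1 h')
    (((f1 h).const_mul 2).add (f2.const_mul 2)) fun p => by
      nlinarith [sq_nonneg ((√(sIndA d s p) - √(histEst d n X m ω p))
        - (√(histEst d n X m ω p) - √(histEst d n X m' ω p)))]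
  rw [compSum_add ((f1 h).const_mul 2) (f2.const_mul 2), compSum_const_mul,
    compSum_const_mul] at key
  have := mul_le_mul_of_nonneg_left key (by positivity : (0 : ℝ) ≤ 1 / (2 * n))
  unfold hellSq
  unfold compSum at this
  linarith

/-- On the good event the selected histogram does as well as any histogram with at most `n`
cells, up to the penalty. -/
lemma oracle {Ω : Type} (X : ℕ → Ω → (Fin d → ℝ)) (ω : Ω) (hd : 0 < d) (hn : 3 < n)
    (hs : Measurable (Function.uncurry s)) (hnn : ∀ x y, 0 ≤ s x y)
    (hone : ∀ x, ∫ y, s x y = 1) (hg : Good1 n (fun i => X i ω) s) {mh : Finset (CubeIdx d)}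
    (hmh : mh ∈ MpartE d ⊤)
    (hsel : gammaSel d n X 1000 ⊤ ω mh
      ≤ (⨅ m : MpartE d ⊤, gammaSel d n X 1000 ⊤ ω (m : Finset (CubeIdx d))) + 1 / n)
    {ℓ : ℕ} {m : Finset (CubeIdx d)} (h : IsPartOf d ℓ (rootC d) m) (hmc : m.card ≤ n) :
    hellSq d n X ω (sIndA d s) (histEst d n X mh ω)
      ≤ 44 * loss n (fun i => X i ω) s m + 28000 * (m.card * (Real.log n / n)) + 7 / n := by
  have hn0 : 0 < n := by omega
  have hL : (0 : ℝ) ≤ 1000 := by norm_num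
  have hm : m ∈ MpartE d ⊤ := mem_MpartE_top.2 ⟨ℓ, h⟩
  obtain ⟨ℓ', h'⟩ := mem_MpartE_top.1 hmh
  have hbdd : BddBelow (Set.range fun m : MpartE d ⊤ =>
      gammaSel d n X 1000 ⊤ ω (m : Finset (CubeIdx d))) := by
    refine ⟨0, ?_⟩
    rintro _ ⟨m', rfl⟩
    obtain ⟨ℓ'', h''⟩ := mem_MpartE_top.1 m'.2
    simp only
    rw [gammaSel_eq X 1000 ω m'.2]
    exact gam_nonneg hn0 hL h''
  have h1 := ciInf_le hbdd ⟨m, hm⟩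
  rw [gammaSel_eq X 1000 ω hmh] at hsel
  simp only [gammaSel_eq X 1000 ω hm] at h1
  have h2 := hell_le_gam X ω hn0 hL h h'
  have h3 := gam_le hd hn hs hnn hone hg h hmc
  have h4 := hell_triangle (n := n) X ω hs hnn hone h h'
  rw [loss_eq X ω hs hnn hone h] at h4
  have h5 : 0 ≤ hellSq d n X ω (histEst d n X m ω) (histEst d n X mh ω) := by
    unfold hellSq
    refine mul_nonneg (by positivity) (Finset.sum_nonneg fun i _ => integral_nonneg fun y => ?_)
    positivity
  have h6 : (1 : ℝ) / 7 ≤ alphaC := by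
    unfold alphaC
    linarith [inv_sqrt_two.1]
  have h7 := mul_le_mul_of_nonneg_right h6 h5
  have e : penC 1000 n m.card = 1000 * (m.card * (Real.log n / n)) := by unfold penC; ring
  rw [e] at h3
  have e2 : (7 : ℝ) / n = 7 * (1 / n) := by ring
  rw [e2]
  linarith

end

noncomputable section
open Classical

variable {d : ℕ} {n : ℕ} {x : ℕ → Fin d → ℝ} {s : (Fin d → ℝ) → (Fin d → ℝ) → ℝ}

/-! ### Loss of a histogram on a fixed partition -/

/-- Exponent used to compare the empirical value `c` on a cube with the level `r` of `√s`. -/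
def tht (c r : ℝ) : ℝ := if c = 0 then -1 else Real.log (√c / r)

variable (n x s) in
/-- The event on which, for every cube `K` of `m`, the count of `K` deviates little from its
compensator, with exponents adapted to the level `r K`. -/
def Good2 (m : Finset (CubeIdx d)) (r : CubeIdx d → ℝ) : Prop :=
  ∀ K ∈ m, ∀ c ∈ Vset d n,
    tht c (r K) * empSum n x (indC d K) - (exp (tht c (r K)) - 1) * smass n x s K
      < 10 * Real.log n

lemma prob_good2 {Ω : Type} [MeasurableSpace Ω] {P : Measure Ω} [IsProbabilityMeasure P]
    {X : ℕ → Ω → (Fin d → ℝ)} (hn : 3 < n) (hX : MarkovDensity P n X s) {ℓ : ℕ}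
    {m : Finset (CubeIdx d)} (hm : IsPartOf d ℓ (rootC d) m) (hmc : m.card ≤ n)
    (r : CubeIdx d → ℝ) :
    P.real {ω | ¬ Good2 n (fun i => X i ω) s m r} ≤ 1 / (n : ℝ) ^ 3 := by
  have hn' : (0 : ℝ) < n := by exact_mod_cast (by omega : 0 < n)
  let E : CubeIdx d → ℝ → Set Ω := fun K c => {ω | 10 * Real.log n ≤
    tht c (r K) * empSum n (fun i => X i ω) (indC d K)
      - (exp (tht c (r K)) - 1) * smass n (fun i => X i ω) s K}
  have hsub : {ω | ¬ Good2 n (fun i => X i ω) s m r} ⊆ ⋃ K ∈ m, ⋃ c ∈ Vset d n, E K c := by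
    intro ω hω
    simp only [Good2, Set.mem_ofPred_eq] at hω
    push Not at hω
    obtain ⟨K, hK, c, hc, hle⟩ := hω
    simp only [Set.mem_iUnion]
    exact ⟨K, hK, c, hc, hle⟩
  have hE : ∀ K ∈ m, ∀ c, P.real (E K c) ≤ 1 / (n : ℝ) ^ 10 := by
    intro K hK c
    have h := deviation hX hm (fun Q => if Q = K then tht c (r K) else 0) (10 * Real.log n)
    have e : ∀ ω, ∑ Q ∈ m, ((if Q = K then tht c (r K) else 0)
        * empSum n (fun i => X i ω) (indC d Q)
        - (exp (if Q = K then tht c (r K) else 0) - 1)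
          * compSum n (fun i => X i ω) fun p => indC d Q p * s p.1 p.2)
        = tht c (r K) * empSum n (fun i => X i ω) (indC d K)
      - (exp (tht c (r K)) - 1) * smass n (fun i => X i ω) s K := by
      intro ω
      rw [Finset.sum_eq_single K]
      · simp [smass]
      · intro Q _ hne; simp [hne]
      · intro hc; exact absurd hK hc
    simp only [e] at h
    refine h.trans (le_of_eq ?_)
    rw [one_div, Real.exp_neg]
    congr 1
    rw [← Real.exp_log (by positivity : (0 : ℝ) < (n : ℝ) ^ 10), Real.log_pow]
    push_cast
    rfl
  have hV : ((Vset d n).card : ℝ) ≤ (n : ℝ) ^ 6 := by exact_mod_cast card_Vset hn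
  have hmc' : (m.card : ℝ) ≤ n := by exact_mod_cast hmc
  calc P.real {ω | ¬ Good2 n (fun i => X i ω) s m r}
      ≤ P.real (⋃ K ∈ m, ⋃ c ∈ Vset d n, E K c) := measureReal_mono hsub (measure_ne_top _ _)
    _ ≤ ∑ K ∈ m, P.real (⋃ c ∈ Vset d n, E K c) := measureReal_biUnion_finset_le _ _
    _ ≤ ∑ K ∈ m, ((n : ℝ) ^ 6 * (1 / (n : ℝ) ^ 10)) := by
        refine Finset.sum_le_sum fun K hK => ?_
        refine (measureReal_biUnion_finset_le _ _).trans ?_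
        refine (Finset.sum_le_sum fun c _ => hE K hK c).trans ?_
        rw [Finset.sum_const, nsmul_eq_mul]
        gcongr
    _ ≤ n * ((n : ℝ) ^ 6 * (1 / (n : ℝ) ^ 10)) := by
        rw [Finset.sum_const, nsmul_eq_mul]
        gcongr
    _ = 1 / (n : ℝ) ^ 3 := by field_simp

/-- With `t = a / b`, the inequality `log t ≥ 1 - 1/t` turns a deviation bound into a
quadratic one. -/
lemma dist_sq_le {a b D S ξ : ℝ} (ha : 0 < a) (hb : 0 < b) (hD : 0 ≤ D)
    (hS : (a - b) * (S - b ^ 2 * D) ≤ 0)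
    (h : Real.log (a / b) * (a ^ 2 * D) - (exp (Real.log (a / b)) - 1) * S < ξ) :
    D * (a - b) ^ 2 ≤ ξ := by
  have ht : 0 < a / b := div_pos ha hb
  rw [Real.exp_log ht] at h
  have h1 := Real.one_sub_inv_le_log_of_pos ht
  have h2 := mul_le_mul_of_nonneg_right h1 (by positivity : 0 ≤ a ^ 2 * D)
  have e1 : (1 - (a / b)⁻¹) * (a ^ 2 * D) = a * (a - b) * D := by field_simp
  have e2 : (a / b - 1) * S = (a - b) * S / b := by field_simp
  have h3 : (a - b) * S / b ≤ (a - b) * b * D := by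
    rw [div_le_iff₀ hb]; nlinarith
  rw [e1] at h2
  rw [e2] at h
  nlinarith

/-- Distance of the square root of the empirical value on `K` to an interval containing the
values of `√s` on `K`, and the resulting bound on the loss. -/
lemma cube_loss (hs : Measurable (Function.uncurry s)) (hnn : ∀ x y, 0 ≤ s x y)
    (hone : ∀ x, ∫ y, s x y = 1) {K : CubeIdx d} (hK : K.1 ≤ n ^ 2) {b₀ b₁ w ξ : ℝ}
    (hb0 : 0 ≤ b₀) (hb1 : 0 < b₁) (hξ : 0 ≤ ξ) (hw : b₁ - b₀ ≤ w)
    (hb : ∀ p, indC d K p = 1 → b₀ ≤ √(s p.1 p.2) ∧ √(s p.1 p.2) ≤ b₁)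
    (h0 : ∀ c ∈ Vset d n, tht c b₀ * empSum n x (indC d K)
      - (exp (tht c b₀) - 1) * smass n x s K < ξ)
    (h1 : ∀ c ∈ Vset d n, tht c b₁ * empSum n x (indC d K)
      - (exp (tht c b₁) - 1) * smass n x s K < ξ) :
    compSum n x (fun p => indC d K p * (√(s p.1 p.2) - √(coef n x K)) ^ 2)
      ≤ 2 * w ^ 2 * compSum n x (indC d K) + 4 * ξ := by
  set D := compSum n x (indC d K) with hDdef
  set a := √(coef n x K) with hadef
  have hD : 0 ≤ D := compSum_nonneg (indC_nonneg K)
  have hc := coef_nonneg (n := n) (x := x) K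
  have ha : 0 ≤ a := Real.sqrt_nonneg _
  have hV := coef_mem (n := n) (x := x) hK
  have haN : a ^ 2 * D = empSum n x (indC d K) := by
    rw [hadef, Real.sq_sqrt hc, hDdef, coef_mul]
  have hSl : b₀ ^ 2 * D ≤ smass n x s K := by
    rw [hDdef, smass, ← compSum_const_mul]
    refine compSum_mono ((fint_indC K).const_mul _) (fint_indC_s hone K) fun p => ?_
    rcases indC_cases K p with hp | hp
    · simp [hp]
    · rw [hp]
      nlinarith [Real.sq_sqrt (hnn p.1 p.2), (hb p hp).1]
  have hSu : smass n x s K ≤ b₁ ^ 2 * D := by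
    rw [hDdef, smass, ← compSum_const_mul]
    refine compSum_mono (fint_indC_s hone K) ((fint_indC K).const_mul _) fun p => ?_
    rcases indC_cases K p with hp | hp
    · simp [hp]
    · rw [hp]
      nlinarith [Real.sq_sqrt (hnn p.1 p.2), (hb p hp).2, Real.sqrt_nonneg (s p.1 p.2)]
  -- `δ` is the distance from `a` to `[b₀, b₁]`
  obtain ⟨δ, hδ0, hδ1, hδ2, hδ⟩ : ∃ δ, 0 ≤ δ ∧ b₀ - δ ≤ a ∧ a ≤ b₁ + δ ∧ D * δ ^ 2 ≤ 2 * ξ := by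
    have hb01 : D = 0 ∨ b₀ ≤ b₁ := by
      by_contra hcon
      push Not at hcon
      have : 0 < D := lt_of_le_of_ne hD (Ne.symm hcon.1)
      have h3 : b₁ ^ 2 < b₀ ^ 2 := by nlinarith
      nlinarith
    by_cases hbig : b₁ < a
    · have hap : 0 < a := hb1.trans hbig
      have hcne : coef n x K ≠ 0 := fun h => by
        rw [hadef, h, Real.sqrt_zero] at hap; exact lt_irrefl _ hap
      have h := h1 _ hV
      rw [tht, if_neg hcne, ← haN] at h
      have := dist_sq_le hap hb1 hD (mul_nonpos_of_nonneg_of_nonpos (by linarith)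
        (by linarith)) h
      rcases hb01 with hz | hle
      · refine ⟨|a - b₁| + |a - b₀|, by positivity, ?_, ?_, ?_⟩
        · linarith [neg_abs_le (a - b₀), abs_nonneg (a - b₁)]
        · linarith [le_abs_self (a - b₁), abs_nonneg (a - b₀)]
        · rw [hz]; linarith
      · exact ⟨a - b₁, by linarith, by linarith, by linarith, by linarith⟩
    · push Not at hbig
      by_cases hsm : a < b₀
      · have hbp : 0 < b₀ := ha.trans_lt hsm
        refine ⟨b₀ - a, by linarith, by linarith, by linarith, ?_⟩
        by_cases hcz : coef n x K = 0
        · have ha0 : a = 0 := by rw [hadef, hcz, Real.sqrt_zero]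
          have h := h0 _ hV
          rw [tht, if_pos hcz, ← haN, ha0] at h
          have he : exp (-1) ≤ 1 / 2 := by
            have := Real.exp_neg_one_lt_d9; linarith
          rw [ha0]
          have hS0 : 0 ≤ smass n x s K := le_trans (by positivity) hSl
          nlinarith
        · have hap : 0 < a := Real.sqrt_pos.2 (lt_of_le_of_ne hc (Ne.symm hcz))
          have h := h0 _ hV
          rw [tht, if_neg hcz, ← haN] at h
          have := dist_sq_le hap hbp hD (mul_nonpos_of_nonpos_of_nonneg (by linarith)
            (by linarith)) h
          nlinarith
      · push Not at hsm
        exact ⟨0, le_rfl, by linarith, by linarith, by linarith⟩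
  calc compSum n x (fun p => indC d K p * (√(s p.1 p.2) - a) ^ 2)
      ≤ compSum n x (fun p => (2 * w ^ 2 + 2 * δ ^ 2) * indC d K p) := by
        refine compSum_mono (fint_loss hs hnn hone K _) ((fint_indC K).const_mul _) fun p => ?_
        rcases indC_cases K p with hp | hp
        · simp [hp]
        · rw [hp, one_mul, mul_one]
          obtain ⟨hp1, hp2⟩ := hb p hp
          have h2 : |√(s p.1 p.2) - a| ≤ w + δ := by
            rw [abs_le]; constructor <;> linarith
          calc (√(s p.1 p.2) - a) ^ 2 = |√(s p.1 p.2) - a| ^ 2 := (sq_abs _).symm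
            _ ≤ (w + δ) ^ 2 := pow_le_pow_left₀ (abs_nonneg _) h2 2
            _ ≤ 2 * w ^ 2 + 2 * δ ^ 2 := by nlinarith [sq_nonneg (w - δ)]
    _ = 2 * w ^ 2 * D + 2 * (D * δ ^ 2) := by rw [compSum_const_mul]; ring
    _ ≤ 2 * w ^ 2 * D + 4 * ξ := by linarith

/-- Bias plus variance bound for the histogram on a fixed partition `m`, when `√s` lies in
`[r₀ K, r₁ K]` on each cube `K` of `m`. -/
lemma loss_le (hn : 3 < n) (hs : Measurable (Function.uncurry s)) (hnn : ∀ x y, 0 ≤ s x y)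
    (hone : ∀ x, ∫ y, s x y = 1) {ℓ : ℕ} {m : Finset (CubeIdx d)}
    (h : IsPartOf d ℓ (rootC d) m) (hℓ : ∀ K ∈ m, K.1 ≤ n ^ 2) {r₀ r₁ : CubeIdx d → ℝ} {w : ℝ}
    (hr0 : ∀ K ∈ m, 0 ≤ r₀ K) (hr1 : ∀ K ∈ m, 0 < r₁ K)
    (hw : ∀ K ∈ m, r₁ K - r₀ K ≤ w)
    (hb : ∀ K ∈ m, ∀ p, indC d K p = 1 → r₀ K ≤ √(s p.1 p.2) ∧ √(s p.1 p.2) ≤ r₁ K)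
    (h0 : Good2 n x s m r₀) (h1 : Good2 n x s m r₁) :
    loss n x s m ≤ w ^ 2 + 20 * (m.card * (Real.log n / n)) := by
  have hn' : (0 : ℝ) < n := by exact_mod_cast (by omega : 0 < n)
  have hlog := one_le_log hn
  have key : ∑ K ∈ m, compSum n x (fun p => indC d K p * (√(s p.1 p.2) - √(coef n x K)) ^ 2)
      ≤ ∑ K ∈ m, (2 * w ^ 2 * compSum n x (indC d K) + 4 * (10 * Real.log n)) :=
    Finset.sum_le_sum fun K hK => cube_loss hs hnn hone (hℓ K hK) (hr0 K hK) (hr1 K hK)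
      (by positivity) (hw K hK) (hb K hK) (h0 K hK) (h1 K hK)
  rw [Finset.sum_add_distrib, ← Finset.mul_sum, Finset.sum_const, nsmul_eq_mul] at key
  have hD : ∑ K ∈ m, compSum n x (indC d K) ≤ n := by
    refine le_trans (le_of_eq ?_) (compSum_root_le (n := n) (x := x))
    rw [← compSum_sum fun K _ => fint_indC K]
    congr 1; funext p
    exact part_sum h valid_root p
  have h2 := mul_le_mul_of_nonneg_left hD (by positivity : 0 ≤ 2 * w ^ 2)
  unfold loss
  rw [one_div_mul_eq_div, div_le_iff₀ (by positivity)]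
  have e : (w ^ 2 + 20 * (m.card * (Real.log n / n))) * (2 * n)
      = 2 * w ^ 2 * n + m.card * (4 * (10 * Real.log n)) := by
    field_simp; ring
  rw [e]
  linarith

end

noncomputable section
open Classical

variable {d : ℕ} {n : ℕ} {s : (Fin d → ℝ) → (Fin d → ℝ) → ℝ}

/-! ### Approximation of a Hölder function on dyadic cubes -/

/-- A coordinatewise Hölder condition controls the increment between two points by changing
one coordinate at a time. -/
lemma holder_increment {k : ℕ} {F : (Fin k → ℝ) → ℝ} {M σ δ : ℝ} (hM : 0 ≤ M) (hσ : 0 < σ)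
    (hF : ∀ z ∈ Set.Icc (0 : Fin k → ℝ) 1, ∀ z' ∈ Set.Icc (0 : Fin k → ℝ) 1, ∀ j,
      (∀ i, i ≠ j → z i = z' i) → |F z - F z'| ≤ M * |z j - z' j| ^ σ)
    {z z' : Fin k → ℝ} (hz : z ∈ Set.Icc (0 : Fin k → ℝ) 1)
    (hz' : z' ∈ Set.Icc (0 : Fin k → ℝ) 1) (hδ : ∀ i, |z i - z' i| ≤ δ) :
    |F z - F z'| ≤ k * (M * δ ^ σ) := by
  have key : ∀ T : Finset (Fin k), |F (T.piecewise z z') - F z'| ≤ T.card * (M * δ ^ σ) := by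
    intro T
    induction T using Finset.induction_on with
    | empty => simp
    | insert j T hj ih =>
      have hmem : ∀ T : Finset (Fin k), T.piecewise z z' ∈ Set.Icc (0 : Fin k → ℝ) 1 := fun T =>
        ⟨Finset.le_piecewise_of_le_of_le T hz.1 hz'.1,
          Finset.piecewise_le_of_le_of_le T hz.2 hz'.2⟩
      have h1 := hF _ (hmem (insert j T)) _ (hmem T) j fun i hi => by
        rw [Finset.piecewise_insert, Function.update_of_ne hi]
      rw [Finset.piecewise_eq_of_mem _ _ _ (Finset.mem_insert_self j T),
        Finset.piecewise_eq_of_notMem _ _ _ hj] at h1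
      have h2 : M * |z j - z' j| ^ σ ≤ M * δ ^ σ :=
        mul_le_mul_of_nonneg_left
          (Real.rpow_le_rpow (abs_nonneg _) (hδ j) hσ.le) hM
      rw [Finset.card_insert_of_notMem hj]
      push_cast
      calc |F ((insert j T).piecewise z z') - F z'|
          ≤ |F ((insert j T).piecewise z z') - F (T.piecewise z z')|
            + |F (T.piecewise z z') - F z'| := abs_sub_le _ _ _
        _ ≤ (T.card + 1) * (M * δ ^ σ) := by linarith
  have := key Finset.univ
  simpa using this

lemma dyadicI_sub {j l : ℕ} {t : ℝ} (h : t ∈ dyadicI j l) :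
    (l : ℝ) / 2 ^ j ≤ t ∧ t ≤ ((l : ℝ) + 1) / 2 ^ j := by
  unfold dyadicI at h
  split_ifs at h with hl
  · refine ⟨h.1, h.2.trans (le_of_eq ?_)⟩
    have : ((l : ℝ) + 1) = 2 ^ j := by exact_mod_cast hl
    rw [this, div_self (by positivity)]
  · exact ⟨h.1, h.2.le⟩

lemma cube_dist {K : CubeIdx d} {z z' : Fin (2 * d) → ℝ} (h : z ∈ cubeSet d K)
    (h' : z' ∈ cubeSet d K) (i : Fin (2 * d)) : |z i - z' i| ≤ 1 / 2 ^ K.1 := by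
  have h1 := dyadicI_sub (h i)
  have h2 := dyadicI_sub (h' i)
  rw [add_div] at h1 h2
  rw [abs_le]; constructor <;> linarith [h1.1, h1.2, h2.1, h2.2]

/-- Choice of the resolution: with `2^j` of order `(Q²/ρ)^{1/(2(d+σ))}`, variance and squared
bias are both of the order of `Q^{2d/(d+σ)} ρ^{σ/(σ+d)} + ρ`. -/
lemma exists_level (hd : 0 < d) {σ Q ρ : ℝ} (hσ : 0 < σ) (hσ1 : σ ≤ 1) (hQ : 0 ≤ Q)
    (hρ : 0 < ρ) :
    ∃ j : ℕ, (4 : ℝ) ^ (d * j) * ρ ≤ Q ^ (2 * (d : ℝ) / (d + σ)) * ρ ^ (σ / (σ + d)) + ρ ∧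
      (2 * Q * (1 / 2 ^ j) ^ σ) ^ 2
        ≤ 16 * (Q ^ (2 * (d : ℝ) / (d + σ)) * ρ ^ (σ / (σ + d)) + ρ) := by
  have hd' : (0 : ℝ) < d := by exact_mod_cast hd
  set R := Q ^ (2 * (d : ℝ) / (d + σ)) * ρ ^ (σ / (σ + d)) with hR
  have hR0 : 0 ≤ R := by positivity
  by_cases hA : Q ^ 2 ≤ ρ
  · refine ⟨0, by simpa using hR0, ?_⟩
    simp only [pow_zero, div_one, Real.one_rpow, mul_one]
    nlinarith
  · push Not at hA
    have hQ0 : 0 < Q := by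
      rcases hQ.lt_or_eq with h | h
      · exact h
      · rw [← h] at hA; norm_num at hA; linarith
    set t := (Q ^ 2 / ρ) ^ (1 / (2 * (d + σ))) with htdef
    have hA1 : 1 ≤ Q ^ 2 / ρ := by rw [one_le_div hρ]; exact hA.le
    have hA0 : 0 < Q ^ 2 / ρ := by positivity
    have ht : 1 ≤ t := Real.one_le_rpow hA1 (by positivity)
    have ht0 : 0 < t := by linarith
    obtain ⟨j, hj1, hj2⟩ := exists_nat_pow_near ht (by norm_num : (1 : ℝ) < 2)
    have hpow : ∀ e : ℝ, (Q ^ 2 / ρ) ^ e = Q ^ (2 * e) * ρ ^ (-e) := fun e => by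
      rw [Real.div_rpow (by positivity) hρ.le, Real.rpow_neg hρ.le, ← div_eq_mul_inv,
        ← Real.rpow_natCast Q 2, ← Real.rpow_mul hQ]
      norm_num
    have e1 : t ^ (2 * (d : ℝ)) * ρ = R := by
      rw [htdef, ← Real.rpow_mul hA0.le, hpow, mul_assoc, hR]
      congr 1
      · congr 1; field_simp
      · nth_rewrite 2 [← Real.rpow_one ρ]
        rw [← Real.rpow_add hρ]
        congr 1; field_simp; ring
    have e2 : Q ^ 2 * t ^ (-(2 * σ)) = R := by
      rw [htdef, ← Real.rpow_mul hA0.le, hpow, ← mul_assoc, hR, ← Real.rpow_natCast Q 2,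
        ← Real.rpow_add hQ0]
      congr 1
      · congr 1; push_cast; field_simp; ring
      · congr 1; field_simp; ring
    refine ⟨j, ?_, ?_⟩
    · have : (4 : ℝ) ^ (d * j) ≤ t ^ (2 * (d : ℝ)) := by
        calc (4 : ℝ) ^ (d * j) = (2 ^ j) ^ (2 * d) := by
              rw [← pow_mul, show (4 : ℝ) = 2 ^ 2 by norm_num, ← pow_mul]; congr 1; ring
          _ ≤ t ^ (2 * d) := pow_le_pow_left₀ (by positivity) hj1 _
          _ = t ^ (2 * (d : ℝ)) := by rw [← Real.rpow_natCast]; push_cast; rfl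
      have := mul_le_mul_of_nonneg_right this hρ.le
      linarith
    · have h1 : (1 : ℝ) / 2 ^ j ≤ 2 / t := by
        rw [div_le_div_iff₀ (by positivity) ht0]
        rw [pow_succ] at hj2; linarith
      have h2 : ((1 : ℝ) / 2 ^ j) ^ σ ≤ 2 * t ^ (-σ) := by
        calc ((1 : ℝ) / 2 ^ j) ^ σ ≤ (2 / t) ^ σ :=
              Real.rpow_le_rpow (by positivity) h1 hσ.le
          _ = 2 ^ σ * t ^ (-σ) := by
              rw [Real.div_rpow (by norm_num) ht0.le, Real.rpow_neg ht0.le, div_eq_mul_inv]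
          _ ≤ 2 * t ^ (-σ) := by
              refine mul_le_mul_of_nonneg_right ?_ (by positivity)
              calc (2 : ℝ) ^ σ ≤ 2 ^ (1 : ℝ) :=
                    Real.rpow_le_rpow_of_exponent_le (by norm_num) hσ1
                _ = 2 := Real.rpow_one 2
      calc (2 * Q * (1 / 2 ^ j) ^ σ) ^ 2 ≤ (2 * Q * (2 * t ^ (-σ))) ^ 2 := by gcongr
        _ = 16 * (Q ^ 2 * (t ^ (-σ)) ^ 2) := by ring
        _ = 16 * (Q ^ 2 * t ^ (-(2 * σ))) := by
            rw [← Real.rpow_natCast (t ^ (-σ)) 2, ← Real.rpow_mul ht0.le]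
            congr 3; push_cast; ring
        _ ≤ 16 * (R + ρ) := by rw [e2]; linarith

/-- A function bounded above by `1`, and by `B` outside a set of small outer measure has
a small expectation; measurability is not needed since a nonintegrable function has Bochner
integral `0`. -/
lemma integral_le_of_bad {Ω : Type} [MeasurableSpace Ω] {P : Measure Ω} [IsProbabilityMeasure P]
    {f : Ω → ℝ} {E : Set Ω} {B : ℝ} (hB : 0 ≤ B) (h1 : ∀ ω, f ω ≤ 1)
    (h : ∀ ω, ω ∉ E → f ω ≤ B) : ∫ ω, f ω ∂P ≤ B + P.real E := by
  by_cases hf : Integrable f P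
  · set E' := toMeasurable P E
    have hE' : MeasurableSet E' := measurableSet_toMeasurable P E
    have hi : Integrable (E'.indicator (1 : Ω → ℝ)) P :=
      (integrable_const (1 : ℝ)).indicator hE'
    calc ∫ ω, f ω ∂P ≤ ∫ ω, (B + E'.indicator (1 : Ω → ℝ) ω) ∂P := by
          refine integral_mono hf ((integrable_const B).add hi) fun ω => ?_
          by_cases hω : ω ∈ E'
          · simp only [Set.indicator_of_mem hω, Pi.one_apply]
            linarith [h1 ω]
          · simp only [Set.indicator_of_notMem hω, add_zero]
            exact h ω fun hc => hω (subset_toMeasurable P E hc)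
      _ = B + P.real E := by
          rw [integral_add (integrable_const B) hi, integral_indicator_one hE']
          simp [Measure.real, E', measure_toMeasurable]
  · rw [integral_undef hf]
    positivity

end

noncomputable section
open Classical

variable {d : ℕ} {n : ℕ} {s : (Fin d → ℝ) → (Fin d → ℝ) → ℝ}

/-! ### The risk bound -/

/-- The risk bound for a transition density whose square root oscillates by at most `o` on the
dyadic cubes of level `j`, where `B` dominates both the variance and the squared bias. -/
lemma risk_le {Ω : Type} [MeasurableSpace Ω] {P : Measure Ω} [IsProbabilityMeasure P]
    {X : ℕ → Ω → (Fin d → ℝ)} (hd : 0 < d) (hn : 3 < n) (hX : MarkovDensity P n X s)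
    {mh : Ω → Finset (CubeIdx d)} (hmh : ∀ ω, mh ω ∈ MpartE d ⊤)
    (hsel : ∀ ω, gammaSel d n X 1000 ⊤ ω (mh ω)
      ≤ (⨅ m : MpartE d ⊤, gammaSel d n X 1000 ⊤ ω (m : Finset (CubeIdx d))) + 1 / n)
    {F : (Fin (2 * d) → ℝ) → ℝ} (hF : ∀ p : (Fin d → ℝ) × (Fin d → ℝ),
      F (pairPt d p.1 p.2) = √(s p.1 p.2))
    {j : ℕ} {o B : ℝ} (ho : 0 ≤ o)
    (hosc : ∀ K : CubeIdx d, validC K → K.1 = j → ∀ z ∈ cubeSet d K, ∀ z' ∈ cubeSet d K,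
      |F z - F z'| ≤ o)
    (hB1 : (4 : ℝ) ^ (d * j) * (Real.log n / n) ≤ B) (hB2 : o ^ 2 ≤ 16 * B)
    (hB3 : Real.log n / n ≤ B) :
    ∫ ω, hellSq d n X ω (sIndA d s) (histEst d n X (mh ω) ω) ∂P ≤ 40000 * B := by
  have hn' : (0 : ℝ) < n := by exact_mod_cast (by omega : 0 < n)
  have hn4 : (4 : ℝ) ≤ n := by exact_mod_cast hn
  have hlog := one_le_log hn
  have hρ : 1 / (n : ℝ) ≤ Real.log n / n := by gcongr
  have hρ0 : 0 < Real.log n / n := by positivity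
  have hB0 : 0 < B := hρ0.trans_le hB3
  have hone : ∀ ω, hellSq d n X ω (sIndA d s) (histEst d n X (mh ω) ω) ≤ 1 := fun ω => by
    obtain ⟨ℓ, h⟩ := mem_MpartE_top.1 (hmh ω)
    rw [loss_eq X ω hX.smeas hX.nonneg hX.one h]
    exact loss_le_one hX.smeas hX.nonneg hX.one h
  by_cases hBbig : 1 ≤ B
  · have := integral_le_of_bad (P := P) (E := ∅) zero_le_one hone fun ω _ => hone ω
    rw [measureReal_empty] at this
    linarith
  push Not at hBbig
  obtain ⟨m, hm, hcard, hlev⟩ := part_uniform j (rootC d)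
  have hlev' : ∀ K ∈ m, K.1 = j := fun K hK => by simpa [rootC] using hlev K hK
  have hval : ∀ K ∈ m, validC K := part_valid hm valid_root
  have hcard' : (m.card : ℝ) ≤ 4 ^ (d * j) := by exact_mod_cast hcard
  have h4 : (4 : ℝ) ^ (d * j) ≤ n := by
    have h := mul_le_mul_of_nonneg_left hρ (by positivity : (0 : ℝ) ≤ 4 ^ (d * j))
    have h2 : (4 : ℝ) ^ (d * j) * (1 / n) ≤ 1 := by linarith
    rwa [mul_one_div, div_le_one hn'] at h2
  have hmn : m.card ≤ n := by exact_mod_cast hcard'.trans h4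
  have hjn : j ≤ n ^ 2 := by
    have h1 : 4 ^ (d * j) ≤ n := by exact_mod_cast h4
    calc j ≤ d * j := Nat.le_mul_of_pos_left j hd
      _ ≤ 4 ^ (d * j) := (Nat.lt_pow_self (by norm_num)).le
      _ ≤ n := h1
      _ ≤ n ^ 2 := Nat.le_self_pow (by norm_num) n
  have hmρ : m.card * (Real.log n / n) ≤ B :=
    (mul_le_mul_of_nonneg_right hcard' hρ0.le).trans hB1
  -- a reference value of `√s` on every cube
  let v : CubeIdx d → ℝ := fun K =>
    if h : (cubeSet d K).Nonempty then F h.choose else 0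
  have hv : ∀ K ∈ m, ∀ p, indC d K p = 1 → |√(s p.1 p.2) - v K| ≤ o := by
    intro K hK p hp
    have hne := cube_nonempty (hval K hK)
    have hpK : pairPt d p.1 p.2 ∈ cubeSet d K := by
      by_contra hc
      rw [indC_eq, if_neg hc] at hp
      exact zero_ne_one hp
    simp only [v, dif_pos hne]
    rw [← hF p]
    exact hosc K (hval K hK) (hlev' K hK) _ hpK _ hne.choose_spec
  have hv0 : ∀ K ∈ m, 0 ≤ v K := by
    intro K hK
    have hne := cube_nonempty (hval K hK)
    simp only [v, dif_pos hne]
    -- every point of `ℝ^{2d}` is a pair, so `F` is nonnegative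
    have e : pairPt d (fun i => hne.choose ⟨i, left_lt i⟩)
        (fun i => hne.choose ⟨d + i, right_lt i⟩) = hne.choose := by
      refine funext ((pair_forall _).2 ⟨fun i => ?_, fun i => ?_⟩)
      · rw [pairPt_left]
      · rw [pairPt_right]
    rw [← e, hF (_, _)]
    exact Real.sqrt_nonneg _
  let r₀ : CubeIdx d → ℝ := fun K => max 0 (v K - o)
  -- the margin `√(log n / n)` keeps the upper level positive
  let r₁ : CubeIdx d → ℝ := fun K => v K + o + √(Real.log n / n)
  let E : Set Ω := {ω | ¬ Good1 n (fun i => X i ω) s} ∪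
    ({ω | ¬ Good2 n (fun i => X i ω) s m r₀} ∪ {ω | ¬ Good2 n (fun i => X i ω) s m r₁})
  have hE : P.real E ≤ B := by
    have h1 := prob_good1 hd hn hX
    have h2 := prob_good2 hn hX hm hmn r₀
    have h3 := prob_good2 hn hX hm hmn r₁
    have h5 : P.real E ≤ _ + (_ + _) := (measureReal_union_le _ _).trans
      (add_le_add h1 ((measureReal_union_le _ _).trans (add_le_add h2 h3)))
    have h6 : 2 / (n : ℝ) ^ 2 + (1 / (n : ℝ) ^ 3 + 1 / (n : ℝ) ^ 3) ≤ 1 / n := by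
      have hu : 1 / (n : ℝ) ≤ 1 / 4 := one_div_le_one_div_of_le (by norm_num) hn4
      have hu0 : 0 < 1 / (n : ℝ) := by positivity
      have e1 : 2 / (n : ℝ) ^ 2 = 2 * (1 / n) ^ 2 := by ring
      have e2 : 1 / (n : ℝ) ^ 3 = (1 / n) ^ 2 * (1 / n) := by ring
      rw [e1, e2]
      have hu2 : (1 / (n : ℝ)) ^ 2 ≤ 1 / 4 * (1 / n) := by nlinarith
      nlinarith [mul_le_mul_of_nonneg_left hu (sq_nonneg (1 / (n : ℝ)))]
    linarith
  have hgood : ∀ ω, ω ∉ E → hellSq d n X ω (sIndA d s) (histEst d n X (mh ω) ω)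
      ≤ 39000 * B := by
    intro ω hω
    simp only [E, Set.mem_union, Set.mem_ofPred_eq, not_or, not_not] at hω
    obtain ⟨g1, g2, g3⟩ := hω
    have hor := oracle X ω hd hn hX.smeas hX.nonneg hX.one g1 (hmh ω) (hsel ω) hm hmn
    have hsq0 := Real.sqrt_nonneg (Real.log n / n)
    have hloss := loss_le (w := 2 * o + √(Real.log n / n)) hn hX.smeas hX.nonneg hX.one hm
      (fun K hK => (hlev' K hK).le.trans hjn)
      (fun K _ => le_max_left _ _)
      (fun K hK => by
        have := Real.sqrt_pos.2 hρ0
        have := hv0 K hK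
        simp only [r₁]; linarith)
      (fun K _ => by
        have := le_max_right 0 (v K - o)
        simp only [r₁]; linarith)
      (fun K hK p hp => by
        have := abs_le.1 (hv K hK p hp)
        exact ⟨max_le (Real.sqrt_nonneg _) (by linarith), by simp only [r₁]; linarith⟩)
      g2 g3
    have hw : (2 * o + √(Real.log n / n)) ^ 2 ≤ 130 * B := by
      nlinarith [Real.sq_sqrt hρ0.le, sq_nonneg (2 * o - √(Real.log n / n))]
    have h7 : 7 / (n : ℝ) = 7 * (1 / n) := by ring
    rw [h7] at hor
    linarith
  have := integral_le_of_bad (P := P) (by positivity) hone hgood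
  linarith

end

noncomputable section
open Classical

/-- **Hölder corollary.** There are universal constants `L₀, C > 0` such that
for all `σ ∈ (0,1]`, if the restriction of `√s` to `A = [0,1]^{2d}` is coordinatewise
`σ`-Hölder with semi-norm `M`, then the estimator `ŝ = ŝ(L₀, ∞)` satisfies
`C E[H²(s 1_A, ŝ)] ≤ (d M)^{2d/(d+σ)} (log n / n)^{σ/(σ+d)} + log n / n`. -/
theorem stmt_11 :
    ∃ L₀ C : ℝ, 0 < L₀ ∧ 0 < C ∧
      ∀ (d : ℕ), 0 < d →
      ∀ (Ω : Type) (_ : MeasurableSpace Ω) (P : Measure Ω), IsProbabilityMeasure P →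
      ∀ (n : ℕ), 3 < n →
      ∀ (X : ℕ → Ω → (Fin d → ℝ)), (∀ i, Measurable (X i)) →
      ∀ (s : (Fin d → ℝ) → (Fin d → ℝ) → ℝ),
        Measurable (Function.uncurry s) → (∀ x y, 0 ≤ s x y) →
        (∀ x, ∫ y, s x y = 1) →
        (∀ i, i < n → ∀ g : (Fin d → ℝ) → ℝ, Measurable g → (∃ c, ∀ x, |g x| ≤ c) →
          P[(fun ω => g (X (i + 1) ω)) |
              ⨆ k ∈ Finset.range (i + 1), MeasurableSpace.comap (X k) inferInstance]
            =ᵐ[P] fun ω => ∫ y, g y * s (X i ω) y) →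
      ∀ (σ : ℝ), σ ∈ Set.Ioc (0 : ℝ) 1 →
      ∀ (M : ℝ), 0 ≤ M →
      -- `√s` restricted to `[0,1]^{2d}` is coordinatewise `σ`-Hölder with semi-norm `M`
      (∀ x ∈ Set.Icc (0 : Fin (2 * d) → ℝ) 1, ∀ y ∈ Set.Icc (0 : Fin (2 * d) → ℝ) 1,
        ∀ j : Fin (2 * d), (∀ i : Fin (2 * d), i ≠ j → x i = y i) →
          |Real.sqrt (s (fun i : Fin d => x ⟨i, by have := i.isLt; omega⟩)
                        (fun i : Fin d => x ⟨d + i, by have := i.isLt; omega⟩))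
            - Real.sqrt (s (fun i : Fin d => y ⟨i, by have := i.isLt; omega⟩)
                        (fun i : Fin d => y ⟨d + i, by have := i.isLt; omega⟩))|
            ≤ M * |x j - y j| ^ σ) →
      ∀ (mhat : Ω → Finset (CubeIdx d)),
        (∀ ω, mhat ω ∈ MpartE d ⊤) →
        (∀ ω, gammaSel d n X L₀ ⊤ ω (mhat ω)
            ≤ (⨅ m : MpartE d ⊤, gammaSel d n X L₀ ⊤ ω (m : Finset (CubeIdx d))) + 1 / n) →
      C * (∫ ω, hellSq d n X ω (sIndA d s) (histEst d n X (mhat ω) ω) ∂P)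
        ≤ ((d : ℝ) * M) ^ (2 * (d : ℝ) / ((d : ℝ) + σ))
            * (Real.log n / n) ^ (σ / (σ + (d : ℝ)))
          + Real.log n / n := by
  refine ⟨1000, 1 / 40000, by norm_num, by norm_num, ?_⟩
  intro d hd Ω _ P _ n hn X hXm s hs hnn hone hmarkov σ hσ M hM hH mhat hmh hsel
  have hX : MarkovDensity P n X s := ⟨hXm, hs, hnn, hone, hmarkov⟩
  have hn' : (0 : ℝ) < n := by exact_mod_cast (by omega : 0 < n)
  have hlog := one_le_log hn
  have hρ : 0 < Real.log n / n := by positivity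
  obtain ⟨j, hj1, hj2⟩ := exists_level hd hσ.1 hσ.2 (by positivity : (0 : ℝ) ≤ d * M) hρ
  have key := risk_le (o := 2 * (d * M) * (1 / 2 ^ j) ^ σ) (j := j) hd hn hX hmh hsel
    (F := fun z => √(s (fun i : Fin d => z ⟨i, left_lt i⟩)
      (fun i : Fin d => z ⟨d + i, right_lt i⟩)))
    (fun p => by simp only [pairPt_left, pairPt_right]) (by positivity)
    (fun K hK hKj z hz z' hz' => by
      have hmem : ∀ z ∈ cubeSet d K, z ∈ Set.Icc (0 : Fin (2 * d) → ℝ) 1 := fun z hz =>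
        ⟨fun i => (((mem_cube hK z).1 hz).1 i).1, fun i => (((mem_cube hK z).1 hz).1 i).2⟩
      have := holder_increment hM hσ.1 hH (hmem z hz) (hmem z' hz')
        (δ := 1 / 2 ^ j) (fun i => hKj ▸ cube_dist hz hz' i)
      refine this.trans (le_of_eq ?_)
      push_cast; ring)
    hj1 hj2 (le_add_of_nonneg_left (by positivity))
  linarith

end
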